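/- arXiv:1307.6440 — 5 statements merged into one kernel-verified Lean document; each statement's English description precedes it below -/
import Mathlib

section
/- The generating function P0(x,y) of crossing-free partitions of points on a circle, where x marks the number of points and y marks the number of blocks, satisfies x·P0(x,y)² + (xy − x − 1)·P0(x,y) + 1 = 0. -/
/-- Two chords `(p.1, p.2)` and `(q.1, q.2)` of a circle with vertices labeled
`0, 1, …, n-1` in circular order interleave, i.e. cross, when
`p.1 < q.1 < p.2 < q.2`. -/
def Interleaves {n : ℕ} (p q : Fin n × Fin n) : Prop :=
  p.1 < q.1 ∧ q.1 < p.2 ∧ p.2 < q.2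

instance {n : ℕ} (p q : Fin n × Fin n) : Decidable (Interleaves p q) :=
  inferInstanceAs (Decidable (_ ∧ _ ∧ _))

/-- The number of crossings of a set of chords (each chord recorded with its
endpoints in increasing order): the number of unordered pairs of chords whose
endpoints interleave around the circle. -/
def crossNum {n : ℕ} (D : Finset (Fin n × Fin n)) : ℕ :=
  ((D ×ˢ D).filter fun pq => Interleaves pq.1 pq.2).card

/-- `a` and `b` lie in the same block of the partition `P`. -/
def SameBlock {n : ℕ} (P : Finpartition (Finset.univ : Finset (Fin n))) (a b : Fin n) : Prop :=
  ∃ B ∈ P.parts, a ∈ B ∧ b ∈ B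

/-- The number of crossings (counted with multiplicity) of a partition of `n`
points on a circle: the number of unordered pairs of interleaving chords whose
endpoints lie two in one block and two in a different block. -/
noncomputable def crossNumPart {n : ℕ}
    (P : Finpartition (Finset.univ : Finset (Fin n))) : ℕ :=
  Nat.card {q : (Fin n × Fin n) × (Fin n × Fin n) //
    Interleaves q.1 q.2 ∧ SameBlock P q.1.1 q.1.2 ∧ SameBlock P q.2.1 q.2.2 ∧
    ¬ SameBlock P q.1.1 q.2.1}

open MvPowerSeries

/-- The generating function `P₀(x,y)` of crossing-free partitions of points on
a circle, where `x` (the variable indexed by `0`) marks the number of points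
and `y` (the variable indexed by `1`) marks the number of blocks. -/
noncomputable def partGF0 : MvPowerSeries (Fin 2) ℚ :=
  fun e => (Nat.card {P : Finpartition (Finset.univ : Finset (Fin (e 0))) //
    crossNumPart P = 0 ∧ P.parts.card = e 1} : ℚ)

/-- `f` sends every point of a noncrossing partition of `{0, …, n-1}` to the minimum of its
block, and fixes all other natural numbers. -/
structure IsBlockMin (n : ℕ) (f : ℕ → ℕ) : Prop where
  le : ∀ a, f a ≤ a
  idem : ∀ a, f (f a) = f a
  nested : ∀ a b, f b ≤ a → a ≤ b → f b ≤ f a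
  fixed : ∀ a, n ≤ a → f a = a

/-- The number of blocks of the partition of `{0, …, n-1}` described by `f`. -/
def blockCount (n : ℕ) (f : ℕ → ℕ) : ℕ :=
  ∑ a ∈ Finset.range n, if f a = a then 1 else 0

/-- The number of blocks, except that an empty partition counts as one block: it stands for the
singleton block that is created when a new point is attached to it. -/
def headCount (n : ℕ) (f : ℕ → ℕ) : ℕ :=
  if n = 0 then 1 else blockCount n f

theorem IsBlockMin.eq_id {f : ℕ → ℕ} (hf : IsBlockMin 0 f) : f = id :=
  funext fun a => hf.fixed a a.zero_le

theorem isBlockMin_id (n : ℕ) : IsBlockMin n id :=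
  ⟨fun _ => le_rfl, fun _ => rfl, fun _ _ h _ => h, fun _ _ => rfl⟩

theorem finite_setOf_isBlockMin (n : ℕ) : {f | IsBlockMin n f}.Finite := by
  refine Set.Finite.of_finite_image
    (f := fun (f : ℕ → ℕ) (i : Fin n) => (Fin.ofNat (n + 1) (f i))) (Set.toFinite _) ?_
  intro f hf g hg h
  funext a
  by_cases ha : a < n
  · have := congrArg Fin.val (congrFun h ⟨a, ha⟩)
    have h1 := hf.le a
    have h2 := hg.le a
    simpa [Nat.mod_eq_of_lt (show f a < n + 1 by omega),
      Nat.mod_eq_of_lt (show g a < n + 1 by omega)] using this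
  · rw [hf.fixed a (by omega), hg.fixed a (by omega)]

open Classical in
/-- The noncrossing partitions of `{0, …, n-1}` for which the statistic `s` equals `m`. -/
noncomputable def blockMins (s : ℕ → (ℕ → ℕ) → ℕ) (n m : ℕ) : Finset (ℕ → ℕ) :=
  (finite_setOf_isBlockMin n).toFinset.filter fun f => s n f = m

@[simp]
theorem mem_blockMins {s : ℕ → (ℕ → ℕ) → ℕ} {n m : ℕ} {f : ℕ → ℕ} :
    f ∈ blockMins s n m ↔ IsBlockMin n f ∧ s n f = m := by
  simp [blockMins]

/-- Put `f` on `{0, …, j-1}`, put `g` on the next `i` points, and add one last point to the block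
of `j - 1`, or as a singleton if `j = 0`. -/
def glue (j i : ℕ) (f g : ℕ → ℕ) (a : ℕ) : ℕ :=
  if a < j then f a else if a < j + i then g (a - j) + j
  else if a = j + i then (if j = 0 then a else f (j - 1)) else a

theorem glue_of_lt {j i a : ℕ} {f g : ℕ → ℕ} (h : a < j) : glue j i f g a = f a := by
  simp [glue, h]

theorem glue_add {j i a : ℕ} {f g : ℕ → ℕ} (h : a < i) : glue j i f g (j + a) = g a + j := by
  simp [glue, h]

theorem glue_last {j i : ℕ} {f g : ℕ → ℕ} :
    glue j i f g (j + i) = if j = 0 then j + i else f (j - 1) := by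
  simp [glue]

theorem glue_of_gt {j i a : ℕ} {f g : ℕ → ℕ} (h : j + i < a) : glue j i f g a = a := by
  simp [glue, show ¬ a < j by omega, show ¬ a < j + i by omega, h.ne']

theorem IsBlockMin.glue {j i : ℕ} {f g : ℕ → ℕ} (hf : IsBlockMin j f) (hg : IsBlockMin i g) :
    IsBlockMin (j + i + 1) (glue j i f g) := by
  have cases_pos : ∀ a, a < j ∨ (∃ c < i, a = j + c) ∨ a = j + i ∨ j + i < a := fun a => by
    by_cases h : a < j
    · exact .inl h
    · by_cases h' : a < j + i
      · exact .inr (.inl ⟨a - j, by omega, by omega⟩)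
      · omega
  have hle : ∀ a, _root_.glue j i f g a ≤ a := fun a => by
    rcases cases_pos a with h | ⟨c, h, rfl⟩ | rfl | h
    · rw [glue_of_lt h]; exact hf.le a
    · rw [glue_add h]; have := hg.le c; omega
    · rw [glue_last]; have := hf.le (j - 1); split_ifs <;> omega
    · rw [glue_of_gt h]
  refine ⟨hle, fun a => ?_, fun a b hba hab => ?_, fun a h => glue_of_gt h⟩
  · rcases cases_pos a with h | ⟨c, h, rfl⟩ | rfl | h
    · rw [glue_of_lt h, glue_of_lt ((hf.le a).trans_lt h), hf.idem]
    · rw [glue_add h, add_comm, glue_add ((hg.le c).trans_lt h), hg.idem, add_comm]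
    · rw [glue_last]
      split_ifs with h0
      · rw [glue_last, if_pos h0]
      · rw [glue_of_lt (by have := hf.le (j - 1); omega), hf.idem]
    · rw [glue_of_gt h, glue_of_gt h]
  · rcases cases_pos b with h | ⟨c, h, rfl⟩ | rfl | h
    · rw [glue_of_lt h] at hba ⊢
      rw [glue_of_lt (hab.trans_lt h)]
      exact hf.nested a b hba hab
    · rw [glue_add h] at hba ⊢
      obtain ⟨d, rfl⟩ : ∃ d, a = j + d := ⟨a - j, by omega⟩
      rw [glue_add (by omega)]
      have := hg.nested d c (by omega) (by omega)
      omega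
    · rw [glue_last] at hba ⊢
      split_ifs at hba ⊢ with h0
      · obtain rfl : a = j + i := le_antisymm hab hba
        rw [glue_last, if_pos h0]
      · have hl := hf.le (j - 1)
        rcases cases_pos a with h' | ⟨d, h', rfl⟩ | rfl | h'
        · rw [glue_of_lt h']
          exact hf.nested a (j - 1) hba (by omega)
        · rw [glue_add h']; omega
        · rw [glue_last, if_neg h0]
        · omega
    · rw [glue_of_gt h] at hba ⊢
      obtain rfl := le_antisymm hab hba
      rw [glue_of_gt h]

theorem blockCount_glue {j i : ℕ} {f g : ℕ → ℕ} (hf : IsBlockMin j f) :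
    blockCount (j + i + 1) (glue j i f g) = headCount j f + blockCount i g := by
  have h1 : ∀ a ∈ Finset.range j,
      (if glue j i f g a = a then 1 else 0) = if f a = a then 1 else 0 := fun a ha => by
    rw [glue_of_lt (Finset.mem_range.1 ha)]
  have h2 : ∀ a ∈ Finset.range i,
      (if glue j i f g (j + a) = j + a then 1 else 0) = if g a = a then 1 else 0 := fun a ha => by
    rw [glue_add (Finset.mem_range.1 ha)]
    simp [add_comm]
  rw [blockCount, Finset.sum_range_succ, Finset.sum_range_add, Finset.sum_congr rfl h1,
    Finset.sum_congr rfl h2, glue_last, headCount, blockCount, blockCount]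
  have hl := hf.le (j - 1)
  by_cases h0 : j = 0
  · subst h0
    simp [add_comm]
  · rw [if_neg h0, if_neg h0, if_neg (by omega), add_zero]

/-- In `glue j i f g`, no point between `j` and `j + i` lies in the block of `j + i`. -/
theorem glue_ne_last {j i a : ℕ} {f g : ℕ → ℕ} (hf : IsBlockMin j f) (hg : IsBlockMin i g)
    (hja : j ≤ a) (ha : a < j + i) : glue j i f g a ≠ glue j i f g (j + i) := by
  obtain ⟨c, rfl⟩ := Nat.exists_eq_add_of_le hja
  rw [glue_add (by omega), glue_last]
  have := hf.le (j - 1)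
  have := hg.le c
  split_ifs <;> omega

theorem glue_pred {j i : ℕ} {f g : ℕ → ℕ} (hj : j ≠ 0) :
    glue j i f g (j - 1) = glue j i f g (j + i) := by
  rw [glue_of_lt (by omega), glue_last, if_neg hj]

theorem glue_injective {j i j' i' : ℕ} {f g f' g' : ℕ → ℕ} (hf : IsBlockMin j f)
    (hg : IsBlockMin i g) (hf' : IsBlockMin j' f') (hg' : IsBlockMin i' g')
    (hn : j + i = j' + i') (h : glue j i f g = glue j' i' f' g') :
    j = j' ∧ i = i' ∧ f = f' ∧ g = g' := by
  obtain rfl : j = j' := by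
    rcases lt_trichotomy j j' with hlt | heq | hlt
    · refine absurd ?_ (glue_ne_last hf hg (a := j' - 1) (by omega) (by omega))
      rw [h, hn, glue_pred (by omega)]
    · exact heq
    · refine absurd ?_ (glue_ne_last hf' hg' (a := j - 1) (by omega) (by omega))
      rw [← h, ← hn, glue_pred (by omega)]
  obtain rfl : i = i' := by omega
  refine ⟨rfl, rfl, funext fun a => ?_, funext fun a => ?_⟩
  · by_cases ha : a < j
    · simpa [glue_of_lt ha] using congrFun h a
    · rw [hf.fixed a (by omega), hf'.fixed a (by omega)]
  · by_cases ha : a < i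
    · simpa [glue_add ha] using congrFun h (j + a)
    · rw [hg.fixed a (by omega), hg'.fixed a (by omega)]

/-- Splitting position: one more than the predecessor of `n` in its block, or `0` if `n` is the
minimum of its block. -/
theorem exists_split (n : ℕ) (f : ℕ → ℕ) :
    ∃ j ≤ n, (∀ a, j ≤ a → a < n → f a ≠ f n) ∧ (j ≠ 0 → f (j - 1) = f n) := by
  classical
  by_cases h : ∃ k < n, f k = f n
  · obtain ⟨k, hk, hkf⟩ := h
    have hs := Nat.findGreatest_spec (P := fun k => k < n ∧ f k = f n) hk.le ⟨hk, hkf⟩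
    refine ⟨_, hs.1, fun a ha han hfa => ?_, fun _ => hs.2⟩
    have := Nat.le_findGreatest (P := fun k => k < n ∧ f k = f n) han.le ⟨han, hfa⟩
    omega
  · push Not at h
    exact ⟨0, n.zero_le, fun a _ han => h a han, fun h0 => absurd rfl h0⟩

theorem IsBlockMin.exists_glue {n : ℕ} {h : ℕ → ℕ} (hh : IsBlockMin (n + 1) h) :
    ∃ j i f g, j + i = n ∧ IsBlockMin j f ∧ IsBlockMin i g ∧ _root_.glue j i f g = h := by
  obtain ⟨j, hjn, hne, hpred⟩ := exists_split n h
  obtain ⟨i, rfl⟩ := Nat.exists_eq_add_of_le hjn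
  have hge : ∀ a, j ≤ a → a < j + i → j ≤ h a := fun a hja ha => by
    by_contra! hlt
    have hj := hpred (by omega)
    have h1 := hh.nested (j - 1) a (by omega) (by omega)
    have h2 := hh.nested a (j + i) (by have := hh.le (j - 1); omega) (by omega)
    exact hne a hja ha (by omega)
  refine ⟨j, i, fun a => if a < j then h a else a, fun a => if a < i then h (j + a) - j else a,
    rfl, ⟨fun a => ?_, fun a => ?_, fun a b hba hab => ?_, fun a ha => if_neg (by omega)⟩,
    ⟨fun a => ?_, fun a => ?_, fun a b hba hab => ?_, fun a ha => if_neg (by omega)⟩,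
    funext fun a => ?_⟩
  · have := hh.le a
    grind
  · have := hh.idem a
    grind
  · have := hh.nested a b
    grind
  · have := hh.le (j + a)
    grind
  · have := hh.idem (j + a)
    have := hh.le (j + a)
    have := hge (j + a)
    have h3 : j + (h (j + a) - j) = h (j + a) ∨ ¬ a < i := by omega
    grind
  · have h1 := hh.nested (j + a) (j + b)
    have h2 := hge (j + b)
    have h3 := hge (j + a)
    grind
  · by_cases h1 : a < j
    · simp [glue_of_lt h1, h1]
    by_cases h2 : a < j + i
    · obtain ⟨c, rfl⟩ := Nat.exists_eq_add_of_le (not_lt.1 h1)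
      have hc : c < i := by omega
      rw [glue_add hc, if_pos hc, Nat.sub_add_cancel (hge _ (by omega) h2)]
    by_cases h3 : a = j + i
    · subst h3
      rw [glue_last]
      split_ifs with h0 h4
      · subst h0
        by_contra! hlt
        have := hh.le (0 + i)
        exact hne (h (0 + i)) (Nat.zero_le _) (by omega) (hh.idem _)
      · exact hpred h0
      · omega
    · rw [glue_of_gt (by omega), hh.fixed a (by omega)]

theorem card_blockMins_succ (e : Fin 2 →₀ ℕ) :
    (blockMins blockCount (e 0 + 1) (e 1)).card =
      ∑ p ∈ Finset.HasAntidiagonal.antidiagonal e, (blockMins headCount (p.1 0) (p.1 1)).card *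
        (blockMins blockCount (p.2 0) (p.2 1)).card := by
  simp_rw [← Finset.card_product]
  rw [← Finset.card_sigma]
  symm
  refine Finset.card_bij (fun x _ => glue (x.1.1 0) (x.1.2 0) x.2.1 x.2.2) ?_ ?_ ?_
  · rintro ⟨⟨u, v⟩, f, g⟩ hx
    simp only [Finset.mem_sigma, Finset.HasAntidiagonal.mem_antidiagonal, Finset.mem_product,
      mem_blockMins] at hx ⊢
    obtain ⟨rfl, ⟨hf, hfu⟩, hg, hgv⟩ := hx
    exact ⟨hf.glue hg, by simp [blockCount_glue hf, hfu, hgv]⟩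
  · rintro ⟨⟨u, v⟩, f, g⟩ hx ⟨⟨u', v'⟩, f', g'⟩ hx' h
    simp only [Finset.mem_sigma, Finset.HasAntidiagonal.mem_antidiagonal, Finset.mem_product,
      mem_blockMins] at hx hx' h
    obtain ⟨huv, ⟨hf, hfu⟩, hg, hgv⟩ := hx
    obtain ⟨huv', ⟨hf', hfu'⟩, hg', hgv'⟩ := hx'
    have hn : u 0 + v 0 = u' 0 + v' 0 := by rw [← Finsupp.add_apply, huv, ← huv']; rfl
    obtain ⟨hj, hi, rfl, rfl⟩ := glue_injective hf hg hf' hg' hn h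
    obtain rfl : u = u' := Finsupp.ext (Fin.forall_fin_two.2 ⟨hj, by rw [← hfu, ← hfu', hj]⟩)
    obtain rfl : v = v' := Finsupp.ext (Fin.forall_fin_two.2 ⟨hi, by rw [← hgv, ← hgv', hi]⟩)
    rfl
  · intro h hh
    obtain ⟨hh, hm⟩ := mem_blockMins.1 hh
    obtain ⟨j, i, f, g, hn, hf, hg, rfl⟩ := hh.exists_glue
    rw [← hn, blockCount_glue hf] at hm
    refine ⟨⟨(Finsupp.equivFunOnFinite.symm ![j, headCount j f],
      Finsupp.equivFunOnFinite.symm ![i, blockCount i g]), f, g⟩, ?_, by simp⟩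
    simp only [Finset.mem_sigma, Finset.HasAntidiagonal.mem_antidiagonal, Finset.mem_product, mem_blockMins]
    refine ⟨Finsupp.ext (Fin.forall_fin_two.2 ⟨?_, ?_⟩), ⟨by simpa using hf, by simp⟩,
      by simpa using hg, by simp⟩ <;> simp [hn, hm]

theorem card_blockMins_blockCount_zero (m : ℕ) :
    (blockMins blockCount 0 m).card = if m = 0 then 1 else 0 := by
  split_ifs with h
  · refine Finset.card_eq_one.2 ⟨id, Finset.eq_singleton_iff_unique_mem.2 ⟨?_, ?_⟩⟩
    · simp [isBlockMin_id, blockCount, h]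
    · exact fun f hf => (mem_blockMins.1 hf).1.eq_id
  · refine Finset.card_eq_zero.2 (Finset.eq_empty_of_forall_notMem fun f hf => h ?_)
    simpa [blockCount] using (mem_blockMins.1 hf).2.symm

theorem card_blockMins_headCount_zero (m : ℕ) :
    (blockMins headCount 0 m).card = if m = 1 then 1 else 0 := by
  split_ifs with h
  · refine Finset.card_eq_one.2 ⟨id, Finset.eq_singleton_iff_unique_mem.2 ⟨?_, ?_⟩⟩
    · simp [isBlockMin_id, headCount, h]
    · exact fun f hf => (mem_blockMins.1 hf).1.eq_id
  · refine Finset.card_eq_zero.2 (Finset.eq_empty_of_forall_notMem fun f hf => h ?_)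
    simpa [headCount] using (mem_blockMins.1 hf).2.symm

section Finpartition

variable {n : ℕ} (P : Finpartition (Finset.univ : Finset (Fin n)))

theorem sameBlock_iff_mem_part {a b : Fin n} : SameBlock P a b ↔ b ∈ P.part a := by
  rw [Finpartition.mem_part_iff_exists]
  exact exists_congr fun _ => and_congr_right fun _ => and_comm

theorem sameBlock_iff_part_eq {a b : Fin n} : SameBlock P a b ↔ P.part a = P.part b := by
  rw [sameBlock_iff_mem_part, P.mem_part_iff_part_eq_part (Finset.mem_univ _) (Finset.mem_univ _),
    eq_comm]

/-- The minimum of the block of `a`. -/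
def partMin (a : Fin n) : Fin n :=
  (P.part a).min' ⟨a, P.mem_part (Finset.mem_univ a)⟩

theorem partMin_mem (a : Fin n) : partMin P a ∈ P.part a :=
  Finset.min'_mem _ _

theorem part_partMin (a : Fin n) : P.part (partMin P a) = P.part a :=
  ((sameBlock_iff_part_eq P).1 ((sameBlock_iff_mem_part P).2 (partMin_mem P a))).symm

theorem partMin_eq_iff {a b : Fin n} : partMin P a = partMin P b ↔ P.part a = P.part b := by
  refine ⟨fun h => ?_, fun h => ?_⟩
  · rw [← part_partMin P a, h, part_partMin]
  · simp only [partMin, h]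

theorem partMin_le (a : Fin n) : partMin P a ≤ a :=
  Finset.min'_le _ _ (P.mem_part (Finset.mem_univ a))

theorem partMin_partMin (a : Fin n) : partMin P (partMin P a) = partMin P a :=
  (partMin_eq_iff P).2 (part_partMin P a)

theorem crossNumPart_eq_zero_iff : crossNumPart P = 0 ↔
    ∀ a b c d : Fin n, a < b → b < c → c < d → P.part a = P.part c → P.part b = P.part d →
      P.part a = P.part b := by
  rw [crossNumPart, Nat.card_eq_zero, or_iff_left (not_infinite_iff_finite.2 inferInstance),
    isEmpty_subtype]
  simp only [sameBlock_iff_part_eq, Interleaves, Prod.forall]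
  grind

/-- `partMin` extended to the natural numbers by the identity. -/
def partMinNat (a : ℕ) : ℕ :=
  if h : a < n then partMin P ⟨a, h⟩ else a

theorem partMinNat_coe (a : Fin n) : partMinNat P a = partMin P a := by
  simp [partMinNat]

theorem isBlockMin_partMinNat (hP : crossNumPart P = 0) : IsBlockMin n (partMinNat P) := by
  rw [crossNumPart_eq_zero_iff] at hP
  have hfix : ∀ a, n ≤ a → partMinNat P a = a := fun a ha => dif_neg (not_lt.2 ha)
  have hle : ∀ a, partMinNat P a ≤ a := fun a => by
    rcases lt_or_ge a n with h | h
    · lift a to Fin n using h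
      rw [partMinNat_coe]
      exact partMin_le P a
    · exact (hfix a h).le
  refine ⟨hle, fun a => ?_, fun a b hba hab => ?_, hfix⟩
  · rcases lt_or_ge a n with h | h
    · lift a to Fin n using h
      rw [partMinNat_coe, partMinNat_coe, partMin_partMin]
    · simp only [hfix a h]
  · rcases lt_or_ge b n with h | h
    · lift b to Fin n using h
      lift a to Fin n using by omega
      rw [partMinNat_coe] at hba ⊢
      rw [partMinNat_coe]
      rw [Fin.val_fin_le] at hba hab ⊢
      by_contra! hlt
      have hab' : a ≠ b := by rintro rfl; exact hlt.ne rfl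
      have hba' : partMin P b ≠ a := by
        rintro rfl; rw [partMin_partMin] at hlt; exact hlt.ne rfl
      have := hP _ _ _ _ hlt (lt_of_le_of_ne hba hba') (lt_of_le_of_ne hab hab')
        (part_partMin P a) (part_partMin P b)
      rw [part_partMin, part_partMin, ← partMin_eq_iff] at this
      exact hlt.ne this
    · rw [hfix b h] at hba
      rw [le_antisymm hab hba]

theorem blockCount_partMinNat : blockCount n (partMinNat P) = P.parts.card := by
  have himage : P.parts = (Finset.univ.filter fun a => partMin P a = a).image P.part := by
    ext B
    simp only [Finset.mem_image, Finset.mem_filter, Finset.mem_univ, true_and]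
    refine ⟨fun hB => ?_, ?_⟩
    · obtain ⟨a, ha⟩ := P.nonempty_of_mem_parts hB
      exact ⟨partMin P a, partMin_partMin P a, by rw [part_partMin, P.part_eq_of_mem hB ha]⟩
    · rintro ⟨a, -, rfl⟩
      exact P.part_mem.2 (Finset.mem_univ a)
  rw [blockCount, ← Fin.sum_univ_eq_sum_range (fun a => if partMinNat P a = a then 1 else 0),
    himage, Finset.card_image_of_injOn, Finset.card_filter]
  · simp only [partMinNat_coe, Fin.val_inj]
  · intro a ha b hb hab
    simp only [Finset.coe_filter, Finset.mem_univ, true_and, Set.mem_ofPred_eq] at ha hb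
    rw [← ha, ← hb, partMin_eq_iff, hab]

variable {P} in
theorem eq_of_partMinNat_eq {Q : Finpartition (Finset.univ : Finset (Fin n))}
    (h : partMinNat P = partMinNat Q) : P = Q := by
  have hmin : ∀ a, partMin P a = partMin Q a := fun a =>
    Fin.ext (by rw [← partMinNat_coe, h, partMinNat_coe])
  have hpart : ∀ a, P.part a = Q.part a := fun a => by
    ext b
    rw [← sameBlock_iff_mem_part, ← sameBlock_iff_mem_part, sameBlock_iff_part_eq,
      sameBlock_iff_part_eq, ← partMin_eq_iff, ← partMin_eq_iff, hmin, hmin]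
  refine Finpartition.ext (Finset.ext fun B => ⟨fun hB => ?_, fun hB => ?_⟩)
  · obtain ⟨a, ha⟩ := P.nonempty_of_mem_parts hB
    rw [← P.part_eq_of_mem hB ha, hpart]
    exact Q.part_mem.2 (Finset.mem_univ a)
  · obtain ⟨a, ha⟩ := Q.nonempty_of_mem_parts hB
    rw [← Q.part_eq_of_mem hB ha, ← hpart]
    exact P.part_mem.2 (Finset.mem_univ a)

theorem IsBlockMin.exists_partMinNat_eq {f : ℕ → ℕ} (hf : IsBlockMin n f) :
    ∃ P : Finpartition (Finset.univ : Finset (Fin n)), crossNumPart P = 0 ∧ partMinNat P = f := by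
  classical
  let P := Finpartition.ofSetoid (Setoid.ker fun a : Fin n => f a)
  have hP : ∀ a b : Fin n, P.part a = P.part b ↔ f a = f b := fun a b => by
    rw [← sameBlock_iff_part_eq, sameBlock_iff_mem_part]
    exact Finpartition.mem_part_ofSetoid_iff_rel
  refine ⟨P, (crossNumPart_eq_zero_iff P).2 fun a b c d hab hbc hcd hac hbd => ?_,
    funext fun a => ?_⟩
  · rw [hP] at hac hbd ⊢
    rw [Fin.lt_def] at hab hbc hcd
    have ha := hf.le a
    have hb := hf.le b
    have h1 := hf.nested b c (by omega) hbc.le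
    have h2 := hf.nested c d (by omega) hcd.le
    omega
  · rcases lt_or_ge a n with h | h
    · lift a to Fin n using h
      have hlt : f a < n := (hf.le a).trans_lt a.2
      rw [partMinNat_coe]
      refine le_antisymm ?_ ?_
      · refine Fin.le_def.1 (Finset.min'_le (P.part a) ⟨f a, hlt⟩ ?_)
        rw [← sameBlock_iff_mem_part, sameBlock_iff_part_eq, hP]
        exact (hf.idem a).symm
      · rw [← (hP _ _).1 (part_partMin P a)]
        exact hf.le _
    · rw [hf.fixed a h]
      exact dif_neg (not_lt.2 h)

theorem card_crossingFree (n m : ℕ) :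
    Nat.card {P : Finpartition (Finset.univ : Finset (Fin n)) //
      crossNumPart P = 0 ∧ P.parts.card = m} = (blockMins blockCount n m).card := by
  rw [← Nat.card_eq_finsetCard]
  refine Nat.card_congr (Equiv.ofBijective (fun P => ⟨partMinNat P.1, mem_blockMins.2
    ⟨isBlockMin_partMinNat P.1 P.2.1, (blockCount_partMinNat P.1).trans P.2.2⟩⟩)
    ⟨fun P Q h => Subtype.ext (eq_of_partMinNat_eq (congrArg Subtype.val h)), ?_⟩)
  rintro ⟨f, hf⟩
  obtain ⟨hf, hm⟩ := mem_blockMins.1 hf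
  obtain ⟨P, hP, rfl⟩ := hf.exists_partMinNat_eq
  exact ⟨⟨P, hP, (blockCount_partMinNat P).symm.trans hm⟩, rfl⟩

end Finpartition

theorem coeff_partGF0 (e : Fin 2 →₀ ℕ) :
    coeff e partGF0 = ((blockMins blockCount (e 0) (e 1)).card : ℚ) :=
  congrArg Nat.cast (card_crossingFree (e 0) (e 1))

theorem coeff_X_one_add_partGF0_sub_one (e : Fin 2 →₀ ℕ) :
    coeff e (X 1 + partGF0 - 1) = ((blockMins headCount (e 0) (e 1)).card : ℚ) := by
  classical
  have h0 : e = 0 ↔ e 0 = 0 ∧ e 1 = 0 := by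
    simp [Finsupp.ext_iff, Fin.forall_fin_two]
  have h1 : e = Finsupp.single 1 1 ↔ e 0 = 0 ∧ e 1 = 1 := by
    simp [Finsupp.ext_iff, Fin.forall_fin_two]
  rw [map_sub, map_add, coeff_partGF0, coeff_X, coeff_one]
  by_cases he : e 0 = 0
  · simp only [h0, h1, he, true_and, card_blockMins_blockCount_zero,
      card_blockMins_headCount_zero]
    split_ifs <;> simp
  · have hs : blockMins headCount (e 0) (e 1) = blockMins blockCount (e 0) (e 1) := by
      ext f
      simp [headCount, he]
    simp [h0, h1, he, hs]

theorem partGF0_eq : partGF0 = 1 + X 0 * ((X 1 + partGF0 - 1) * partGF0) := by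
  classical
  ext e
  rw [map_add, coeff_partGF0, coeff_one, X, coeff_monomial_mul]
  by_cases he : e 0 = 0
  · have h0 : e = 0 ↔ e 1 = 0 := by
      simp [Finsupp.ext_iff, Fin.forall_fin_two, he]
    have hle : ¬ Finsupp.single 0 1 ≤ e := by rw [Finsupp.single_le_iff]; omega
    rw [if_neg hle, he, card_blockMins_blockCount_zero]
    simp [h0]
  · obtain ⟨e, rfl⟩ : ∃ e', e = Finsupp.single 0 1 + e' :=
      exists_add_of_le (Finsupp.single_le_iff.2 (Nat.one_le_iff_ne_zero.2 he))
    rw [if_neg fun h => he (by simp [h]), if_pos le_self_add, add_tsub_cancel_left, coeff_mul]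
    simp_rw [coeff_X_one_add_partGF0_sub_one, coeff_partGF0]
    have := card_blockMins_succ e
    simp only [Finsupp.add_apply, Finsupp.single_eq_same, ne_eq, one_ne_zero, not_false_eq_true,
      Finsupp.single_eq_of_ne, zero_add, one_mul]
    rw [add_comm 1, this]
    push_cast
    rfl

/-- The generating function `P₀(x,y)` of crossing-free partitions of points on
a circle satisfies `x·P₀² + (xy − x − 1)·P₀ + 1 = 0`. -/
theorem partGF0_algebraic_equation :
    (MvPowerSeries.X 0 : MvPowerSeries (Fin 2) ℚ) * partGF0 ^ 2 +
      (MvPowerSeries.X 0 * MvPowerSeries.X 1 - MvPowerSeries.X 0 - 1) * partGF0 + 1 = 0 := by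
  linear_combination -partGF0_eq
end

section
/- The number of partitions of n labeled points on a circle having exactly one crossing (counted with multiplicity) equals binom(2n−5, n−4) for every n ≥ 4. -/
namespace CircleCrossings

variable {n : ℕ}

lemma sameBlock_iff_mem_part {P : Finpartition (Finset.univ : Finset (Fin n))} {a b : Fin n} :
    SameBlock P a b ↔ a ∈ P.part b := by
  constructor
  · rintro ⟨B, hB, ha, hb⟩
    rwa [P.part_eq_of_mem hB hb]
  · intro h
    exact ⟨P.part b, P.part_mem.2 (Finset.mem_univ b), h, P.mem_part (Finset.mem_univ b)⟩

lemma sameBlock_iff_part_eq {P : Finpartition (Finset.univ : Finset (Fin n))} {a b : Fin n} :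
    SameBlock P a b ↔ P.part a = P.part b := by
  rw [sameBlock_iff_mem_part,
    P.mem_part_iff_part_eq_part (Finset.mem_univ a) (Finset.mem_univ b)]

lemma eq_of_sameBlock_iff {P Q : Finpartition (Finset.univ : Finset (Fin n))}
    (h : ∀ a b, SameBlock P a b ↔ SameBlock Q a b) : P = Q := by
  have hpart : ∀ b, P.part b = Q.part b := fun b => by
    ext a
    rw [← sameBlock_iff_mem_part, ← sameBlock_iff_mem_part, h]
  have key : ∀ {P Q : Finpartition (Finset.univ : Finset (Fin n))},
      (∀ b, P.part b = Q.part b) → P.parts ⊆ Q.parts := by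
    intro P Q h B hB
    obtain ⟨b, hb⟩ := P.nonempty_of_mem_parts hB
    rw [← P.part_eq_of_mem hB hb, h]
    exact Q.part_mem.2 (Finset.mem_univ b)
  exact Finpartition.ext (Finset.Subset.antisymm (key hpart) (key fun b => (hpart b).symm))

/-- Every function induces the partition of its domain into fibers. -/
lemma exists_sameBlock_iff_eq {α : Type*} (f : Fin n → α) :
    ∃ P : Finpartition (Finset.univ : Finset (Fin n)), ∀ a b, SameBlock P a b ↔ f a = f b := by
  classical
  refine ⟨Finpartition.ofSetoid (Setoid.ker f), fun a b => ?_⟩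
  rw [sameBlock_iff_mem_part, Finpartition.mem_part_ofSetoid_iff_rel, Setoid.ker_def, eq_comm]

/-- The four vertices `a < b < c < d` carry the only crossing of `P`. -/
def IsUniqueCrossing (P : Finpartition (Finset.univ : Finset (Fin n))) (a b c d : Fin n) : Prop :=
  (a < b ∧ b < c ∧ c < d ∧ SameBlock P a c ∧ SameBlock P b d ∧ ¬ SameBlock P a b) ∧
    ∀ i j k l, i < j → j < k → k < l →
      SameBlock P i k → SameBlock P j l → ¬ SameBlock P i j →
      i = a ∧ j = b ∧ k = c ∧ l = d

lemma crossNumPart_eq_one_iff {P : Finpartition (Finset.univ : Finset (Fin n))} :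
    crossNumPart P = 1 ↔ ∃ a b c d, IsUniqueCrossing P a b c d := by
  rw [crossNumPart, Nat.card_eq_one_iff_exists]
  constructor
  · rintro ⟨⟨⟨⟨a, c⟩, b, d⟩, ⟨hab, hbc, hcd⟩, hac, hbd, hn⟩, h⟩
    refine ⟨a, b, c, d, ⟨hab, hbc, hcd, hac, hbd, hn⟩, fun i j k l hij hjk hkl hik hjl hn => ?_⟩
    have := h ⟨⟨(i, k), (j, l)⟩, ⟨hij, hjk, hkl⟩, hik, hjl, hn⟩
    simp only [Subtype.mk.injEq, Prod.mk.injEq] at this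
    tauto
  · rintro ⟨a, b, c, d, ⟨hab, hbc, hcd, hac, hbd, hn⟩, h⟩
    refine ⟨⟨⟨(a, c), (b, d)⟩, ⟨hab, hbc, hcd⟩, hac, hbd, hn⟩, ?_⟩
    rintro ⟨⟨⟨i, k⟩, j, l⟩, ⟨hij, hjk, hkl⟩, hik, hjl, hn⟩
    obtain ⟨rfl, rfl, rfl, rfl⟩ := h i j k l hij hjk hkl hik hjl hn
    rfl

/-- `o` sends each vertex to the least vertex of its block in some noncrossing partition. -/
structure IsNoncrossing (o : Fin n → Fin n) : Prop where
  le : ∀ i, o i ≤ i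
  lt_of_owner_lt : ∀ i k, o i < o k → o k ≤ i → k < i

lemma IsNoncrossing.apply_apply {o : Fin n → Fin n} (h : IsNoncrossing o) (i : Fin n) :
    o (o i) = o i := by
  by_contra hne
  have h1 := h.le (o i)
  have h2 := h.lt_of_owner_lt (o i) i (lt_of_le_of_ne h1 hne) le_rfl
  exact absurd (h.le i) (not_le.2 h2)

/-- `o` is the noncrossing partition obtained from `P` by merging `{a, c}` and `{b, d}`. -/
def IsMerge (P : Finpartition (Finset.univ : Finset (Fin n))) (o : Fin n → Fin n)
    (a b c d : Fin n) : Prop :=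
  a < b ∧ b < c ∧ c < d ∧ (∀ i, o i = a ↔ i = a ∨ i = b ∨ i = c ∨ i = d) ∧
    ∀ i j, SameBlock P i j ↔ o i = o j ∧ (o i = a → ((i = a ∨ i = c) ↔ (j = a ∨ j = c)))

lemma exists_lt_of_card_eq_four {s : Finset (Fin n)} (hs : s.card = 4) :
    ∃ a b c d, a < b ∧ b < c ∧ c < d ∧ ∀ i, i ∈ s ↔ i = a ∨ i = b ∨ i = c ∨ i = d := by
  let e := s.orderEmbOfFin hs
  refine ⟨e 0, e 1, e 2, e 3, ?_, ?_, ?_, fun i => ?_⟩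
  · exact e.strictMono (by decide)
  · exact e.strictMono (by decide)
  · exact e.strictMono (by decide)
  · rw [← Finset.mem_coe, ← Finset.range_orderEmbOfFin s hs]
    simp only [Set.mem_range, Fin.exists_fin_succ, e]
    simp [eq_comm]

lemma exists_isMerge_of_isNoncrossing {o : Fin n → Fin n} (h : IsNoncrossing o) {m : Fin n}
    (hm : (Finset.univ.filter fun i => o i = m).card = 4) :
    ∃ P : Finpartition (Finset.univ : Finset (Fin n)), crossNumPart P = 1 ∧
      ∃ b c d, IsMerge P o m b c d := by
  classical
  obtain ⟨a, b, c, d, hab, hbc, hcd, hs⟩ := exists_lt_of_card_eq_four hm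
  simp only [Finset.mem_filter, Finset.mem_univ, true_and] at hs
  obtain rfl : m = a := by
    have ha := (hs a).2 (Or.inl rfl)
    have h1 := h.apply_apply a
    rw [ha] at h1
    have h2 := h.le a
    have h3 := (hs m).1 h1
    rw [ha] at h2
    grind
  obtain ⟨P, hP⟩ := exists_sameBlock_iff_eq
    (fun i => (o i, o i = m ∧ (i = m ∨ i = c)))
  have hP' : ∀ i j, SameBlock P i j ↔
      o i = o j ∧ (o i = m → ((i = m ∨ i = c) ↔ (j = m ∨ j = c))) := by
    intro i j
    rw [hP, Prod.mk.injEq, eq_iff_iff]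
    grind
  refine ⟨P, crossNumPart_eq_one_iff.2 ⟨m, b, c, d, ⟨hab, hbc, hcd, ?_, ?_, ?_⟩, ?_⟩,
    b, c, d, hab, hbc, hcd, hs, hP'⟩
  · grind
  · grind
  · grind
  · intro i j k l hij hjk hkl hik hjl hn
    rw [hP'] at hik hjl hn
    by_cases ho : o i = o j
    · grind
    · exfalso
      have h1 := h.le i
      have h2 := h.le j
      rcases lt_or_gt_of_ne ho with hlt | hlt
      · have := h.lt_of_owner_lt k l (by grind) (by grind)
        grind
      · have := h.lt_of_owner_lt j k (by grind) (by grind)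
        grind

lemma IsMerge.partition_unique {P Q : Finpartition (Finset.univ : Finset (Fin n))}
    {o : Fin n → Fin n} {a b c d b' c' d' : Fin n} (hP : IsMerge P o a b c d)
    (hQ : IsMerge Q o a b' c' d') : P = Q := by
  obtain ⟨hab, hbc, hcd, hs, hP⟩ := hP
  obtain ⟨hab', hbc', hcd', hs', hQ⟩ := hQ
  have hc : c = c' := by
    have h1 := (hs b).2 (by grind)
    have h2 := (hs c).2 (by grind)
    have h3 := (hs d).2 (by grind)
    have h4 := (hs' b').2 (by grind)
    have h5 := (hs' c').2 (by grind)
    have h6 := (hs' d').2 (by grind)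
    rw [hs'] at h1 h2 h3
    rw [hs] at h4 h5 h6
    grind
  subst hc
  exact eq_of_sameBlock_iff fun i j => by rw [hP, hQ]

lemma IsUniqueCrossing.eq_of_isMerge {P : Finpartition (Finset.univ : Finset (Fin n))}
    {o : Fin n → Fin n} {a b c d a' b' c' d' : Fin n} (h : IsUniqueCrossing P a b c d)
    (hm : IsMerge P o a' b' c' d') : a' = a ∧ b' = b ∧ c' = c ∧ d' = d := by
  obtain ⟨hab, hbc, hcd, hs, hP⟩ := hm
  have h1 := hs a'
  have h2 := hs b'
  have h3 := hs c'
  have h4 := hs d'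
  exact h.2 a' b' c' d' hab hbc hcd ((hP _ _).2 (by grind)) ((hP _ _).2 (by grind))
    (by rw [hP]; grind)

lemma IsMerge.owner_unique {P : Finpartition (Finset.univ : Finset (Fin n))}
    {o o' : Fin n → Fin n} {a b c d : Fin n} (ho : IsNoncrossing o) (ho' : IsNoncrossing o')
    (h : IsMerge P o a b c d) (h' : IsMerge P o' a b c d) : o = o' := by
  obtain ⟨hab, hbc, hcd, hs, hP⟩ := h
  obtain ⟨-, -, -, hs', hP'⟩ := h'
  funext i
  by_cases hi : o i = a
  · rw [hi, eq_comm, hs', ← hs, hi]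
  have hi' : o' i ≠ a := by rwa [Ne, hs', ← hs]
  have h1 := ho.apply_apply i
  have h2 := ho'.apply_apply i
  have h3 : SameBlock P (o i) i := (hP _ _).2 (by grind)
  have h4 : SameBlock P (o' i) i := (hP' _ _).2 (by grind)
  rw [hP'] at h3
  rw [hP] at h4
  have h5 := ho.le (o' i)
  have h6 := ho'.le (o i)
  grind

lemma IsUniqueCrossing.exists_isMerge {P : Finpartition (Finset.univ : Finset (Fin n))}
    {a b c d : Fin n} (h : IsUniqueCrossing P a b c d) :
    ∃ o : Fin n → Fin n, IsNoncrossing o ∧ IsMerge P o a b c d := by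
  classical
  obtain ⟨⟨hab, hbc, hcd, hac, hbd, hnab⟩, huniq⟩ := h
  have hsymm : ∀ {i j}, SameBlock P i j → SameBlock P j i := fun h => by
    rw [sameBlock_iff_part_eq] at h ⊢; exact h.symm
  have htrans : ∀ {i j k}, SameBlock P i j → SameBlock P j k → SameBlock P i k :=
    fun h h' => by
      rw [sameBlock_iff_part_eq] at h h' ⊢; exact h.trans h'
  have hrefl : ∀ i, SameBlock P i i := fun i => by rw [sameBlock_iff_part_eq]
  have hblock_ac : ∀ x, SameBlock P a x ↔ x = a ∨ x = c := by
    intro x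
    refine ⟨fun hx => ?_, by rintro (rfl | rfl) <;> grind⟩
    by_contra hne
    have hxb : x ≠ b := by grind
    have hxd : x ≠ d := by grind
    have h1 := huniq x b c d
    have h2 := huniq a b x d
    have h3 := huniq b c d x
    grind
  have hblock_bd : ∀ x, SameBlock P b x ↔ x = b ∨ x = d := by
    intro x
    refine ⟨fun hx => ?_, by rintro (rfl | rfl) <;> grind⟩
    by_contra hne
    have hxa : x ≠ a := by grind
    have hxc : x ≠ c := by grind
    have h1 := huniq a x c d
    have h2 := huniq x a b c
    have h3 := huniq a b c x
    grind
  let M : Fin n → Prop := fun i => i = a ∨ i = b ∨ i = c ∨ i = d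
  have hex : ∀ i, ∃ r, SameBlock P r i ∧ ∀ j, SameBlock P j i → r ≤ j := by
    intro i
    let s := Finset.univ.filter fun j => SameBlock P j i
    have hs : s.Nonempty := ⟨i, by simpa [s] using hrefl i⟩
    refine ⟨s.min' hs, by simpa [s] using s.min'_mem hs, fun j hj => s.min'_le j ?_⟩
    simpa [s] using hj
  choose r hr hrmin using hex
  have hM : ∀ {i j}, SameBlock P i j → M i → M j := by
    intro i j hij hi
    have h1 := hblock_ac j
    have h2 := hblock_bd j
    grind
  have hr_le : ∀ i, r i ≤ i := fun i => hrmin i i (hrefl i)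
  have hr_eq : ∀ {i j}, SameBlock P i j → r i = r j := fun {i j} hij =>
    le_antisymm (hrmin i _ (htrans (hr j) (hsymm hij))) (hrmin j _ (htrans (hr i) hij))
  have hno : ∀ i j k l, i < j → j < k → k < l → SameBlock P i k → SameBlock P j l →
      ¬ SameBlock P i j → M i ∧ M j := by
    intro i j k l h1 h2 h3 h4 h5 h6
    have := huniq i j k l h1 h2 h3 h4 h5 h6
    grind
  let o : Fin n → Fin n := fun i => if M i then a else r i
  have ho_pos : ∀ {i}, M i → o i = a := fun h => if_pos h
  have ho_neg : ∀ {i}, ¬ M i → o i = r i := fun h => if_neg h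
  have hMr : ∀ {i}, ¬ M i → ¬ M (r i) := fun hi h => hi (hM (hr _) h)
  have hfiber : ∀ i, o i = a ↔ i = a ∨ i = b ∨ i = c ∨ i = d := by
    intro i
    refine ⟨fun hi => ?_, ho_pos⟩
    by_contra hn
    rw [ho_neg hn] at hi
    exact hMr hn (hi ▸ Or.inl rfl)
  refine ⟨o, ⟨fun i => ?_, fun i k hik hki => ?_⟩, hab, hbc, hcd, hfiber, fun i j => ?_⟩
  · by_cases hi : M i
    · rw [ho_pos hi]; grind
    · rw [ho_neg hi]; exact hr_le i
  · by_contra! hlt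
    by_cases hi : M i <;> by_cases hk : M k
    · rw [ho_pos hi, ho_pos hk] at hik
      exact lt_irrefl _ hik
    · rw [ho_pos hi, ho_neg hk] at hik
      rw [ho_neg hk] at hki
      have h0 := hMr hk
      have h1 := hr k
      have h2 := hno a (r k) c k
      have h3 := hno b (r k) d k
      have h4 := hno (r k) b k d
      grind
    · rw [ho_neg hi, ho_pos hk] at hik
      rw [ho_pos hk] at hki
      have h0 := hMr hi
      have h1 := hr i
      have h2 := hno (r i) a i c
      have h3 := hno (r i) b i d
      grind
    · rw [ho_neg hi, ho_neg hk] at hik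
      rw [ho_neg hk] at hki
      have h1 := hr i
      have h2 := hr k
      have h3 := hno (r i) (r k) i k
      have h4 := @hr_eq i k
      have h5 := @hr_eq (r k) k
      have h6 := @hr_eq (r i) i
      have h7 := @hr_eq (r i) (r k)
      have h0 := hMr hi
      grind
  · by_cases hi : M i
    · have h1 := hblock_ac j
      have h2 := hblock_bd j
      have h3 := hfiber i
      have h4 := hfiber j
      grind
    · have h1 : ¬ o i = a := fun h => hi ((hfiber i).1 h)
      refine ⟨fun hij => ⟨?_, fun h => absurd h h1⟩, fun ⟨hij, _⟩ => ?_⟩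
      · rw [ho_neg hi, ho_neg fun hj => hi (hM (hsymm hij) hj), hr_eq hij]
      · have hj : ¬ M j := fun hj => h1 (hij.trans (ho_pos hj))
        rw [ho_neg hi, ho_neg hj] at hij
        exact htrans (hsymm (hr i)) (hij ▸ hr j)

lemma card_crossNumPart_eq_one :
    Nat.card {P : Finpartition (Finset.univ : Finset (Fin n)) // crossNumPart P = 1} =
      Nat.card {x : (Fin n → Fin n) × Fin n //
        IsNoncrossing x.1 ∧ (Finset.univ.filter fun i => x.1 i = x.2).card = 4} := by
  symm
  choose P hP b c d hm using fun x : {x : (Fin n → Fin n) × Fin n //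
    IsNoncrossing x.1 ∧ (Finset.univ.filter fun i => x.1 i = x.2).card = 4} =>
    exists_isMerge_of_isNoncrossing x.2.1 x.2.2
  refine Nat.card_congr (Equiv.ofBijective (fun x => ⟨P x, hP x⟩) ⟨fun x y hxy => ?_, ?_⟩)
  · have hxy : P x = P y := congrArg Subtype.val hxy
    obtain ⟨a', b', c', d', hu⟩ := crossNumPart_eq_one_iff.1 (hP x)
    have hmx := hm x
    have hmy := hm y
    rw [← hxy] at hmy
    obtain ⟨hx1, hx2, hx3, hx4⟩ := hu.eq_of_isMerge hmx
    obtain ⟨hy1, hy2, hy3, hy4⟩ := hu.eq_of_isMerge hmy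
    rw [hx1, hx2, hx3, hx4] at hmx
    rw [hy1, hy2, hy3, hy4] at hmy
    exact Subtype.ext (Prod.ext (hmx.owner_unique x.2.1 y.2.1 hmy) (hx1.trans hy1.symm))
  · rintro ⟨Q, hQ⟩
    obtain ⟨a, b', c', d', hu⟩ := crossNumPart_eq_one_iff.1 hQ
    obtain ⟨o, ho, hmo⟩ := IsUniqueCrossing.exists_isMerge hu
    have hcard : (Finset.univ.filter fun i => o i = a).card = 4 := by
      obtain ⟨hab, hbc, hcd, hs, -⟩ := hmo
      have : (Finset.univ.filter fun i => o i = a) = {a, b', c', d'} := by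
        ext i; simp [hs]
      rw [this]
      have h1 := hab.trans hbc
      have h2 := hbc.trans hcd
      have h3 := hab.trans h2
      simp [hab.ne, hbc.ne, hcd.ne, h1.ne, h2.ne, h3.ne]
    exact ⟨⟨(o, a), ho, hcard⟩, Subtype.ext ((hm ⟨(o, a), ho, hcard⟩).partition_unique hmo)⟩

/-- The sum of the suffix of `g` starting at `j`, plus `j`. -/
def height {m : ℕ} (g : Fin m → ℕ) (j : ℕ) : ℕ :=
  (∑ t : Fin m, if j ≤ t then g t else 0) + j

/-- Every suffix of `g` has sum at most its length. -/
def IsDominated {m : ℕ} (g : Fin m → ℕ) : Prop := ∀ j ≤ m, height g j ≤ m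

lemma height_succ_add {m : ℕ} (g : Fin m → ℕ) (j : Fin m) :
    height g (j + 1) + g j = height g j + 1 := by
  have h : ∀ t : Fin m, (if (j : ℕ) ≤ t then g t else 0) =
      (if (j : ℕ) + 1 ≤ t then g t else 0) + if t = j then g t else 0 := by
    intro t
    grind
  simp only [height, h, Finset.sum_add_distrib, Finset.sum_ite_eq', Finset.mem_univ, if_true]
  ring

lemma height_zero {m : ℕ} (g : Fin m → ℕ) : height g 0 = ∑ t, g t := by
  simp [height]

/-- The block sizes of `o`, recorded at the least vertices of the blocks. -/
def fiberCard (o : Fin n → Fin n) (j : Fin n) : ℕ := (Finset.univ.filter fun i => o i = j).card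

lemma sum_fiberCard (o : Fin n → Fin n) : ∑ j, fiberCard o j = n := by
  have := Finset.card_eq_sum_card_fiberwise (f := o) (s := Finset.univ) (t := Finset.univ)
    (fun _ _ => Finset.mem_coe.2 (Finset.mem_univ _))
  rw [Finset.card_univ, Fintype.card_fin] at this
  exact this.symm

lemma height_fiberCard (o : Fin n → Fin n) (j : ℕ) :
    height (fiberCard o) j = (Finset.univ.filter fun k => j ≤ o k).card + j := by
  rw [height, Finset.card_eq_sum_card_fiberwise (f := o) (t := Finset.univ)
    (fun _ _ => Finset.mem_coe.2 (Finset.mem_univ _))]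
  congr 1
  refine Finset.sum_congr rfl fun t _ => ?_
  rw [Finset.filter_filter]
  split_ifs with h
  · rw [fiberCard]
    congr 1
    ext k
    grind
  · symm
    rw [Finset.card_eq_zero]
    ext k
    grind

lemma IsNoncrossing.isDominated {o : Fin n → Fin n} (h : IsNoncrossing o) :
    IsDominated (fiberCard o) := by
  intro j hj
  rw [height_fiberCard]
  have h1 : (Finset.univ.filter fun k => j ≤ (o k : ℕ)).card ≤ (Finset.Ico j n).card :=
    Finset.card_le_card_of_injOn (fun k => (k : ℕ))
      (fun k hk => by
        have := h.le k
        simp only [Finset.coe_filter, Finset.mem_univ, true_and, Set.mem_ofPred_eq] at hk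
        simp only [Finset.coe_Ico, Set.mem_Ico]
        exact ⟨hk.trans this, k.2⟩)
      (fun x _ y _ => Fin.ext)
  rw [Nat.card_Ico] at h1
  omega

lemma IsNoncrossing.height_le {o : Fin n → Fin n} (h : IsNoncrossing o) (i : Fin n) :
    height (fiberCard o) (i + 1) ≤ height (fiberCard o) (o i) := by
  rw [height_fiberCard, height_fiberCard]
  have hle : (o i : ℕ) ≤ i := h.le i
  have hd : Disjoint (Finset.univ.filter fun k => (i : ℕ) + 1 ≤ o k) (Finset.Icc (o i) i) := by
    rw [Finset.disjoint_left]
    intro k hk hk'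
    have := h.le k
    simp only [Finset.mem_filter, Finset.mem_univ, true_and] at hk
    rw [Finset.mem_Icc] at hk'
    grind
  have h1 : ((Finset.univ.filter fun k => (i : ℕ) + 1 ≤ o k) ∪ Finset.Icc (o i) i).card ≤
      (Finset.univ.filter fun k => (o i : ℕ) ≤ o k).card := by
    refine Finset.card_le_card fun k hk => ?_
    simp only [Finset.mem_union, Finset.mem_filter, Finset.mem_univ, true_and,
      Finset.mem_Icc] at hk ⊢
    rcases hk with hk | ⟨hk, hk'⟩
    · omega
    · by_contra! hlt
      exact absurd (h.lt_of_owner_lt k i hlt hk) (not_lt.2 hk')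
  rw [Finset.card_union_of_disjoint hd, Fin.card_Icc] at h1
  omega

lemma IsNoncrossing.lt_height {o : Fin n → Fin n} (h : IsNoncrossing o) {i j : Fin n}
    (hij : o i < j) (hji : j ≤ i) :
    height (fiberCard o) j < height (fiberCard o) (i + 1) := by
  rw [height_fiberCard, height_fiberCard]
  have h1 : (Finset.univ.filter fun k => (j : ℕ) ≤ o k).card ≤
      ((Finset.univ.filter fun k => (i : ℕ) + 1 ≤ o k) ∪ Finset.Ico j i).card := by
    refine Finset.card_le_card fun k hk => ?_
    simp only [Finset.mem_union, Finset.mem_filter, Finset.mem_univ, true_and,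
      Finset.mem_Ico] at hk ⊢
    by_cases hki : (i : ℕ) + 1 ≤ o k
    · exact Or.inl hki
    · have := h.lt_of_owner_lt i k (lt_of_lt_of_le hij hk) (by grind)
      exact Or.inr ⟨le_trans hk (h.le k), this⟩
  have h2 := h1.trans (Finset.card_union_le _ _)
  rw [Fin.card_Ico] at h2
  have : (j : ℕ) ≤ i := hji
  omega

lemma IsNoncrossing.eq_of_fiberCard_eq {o o' : Fin n → Fin n} (h : IsNoncrossing o)
    (h' : IsNoncrossing o') (heq : fiberCard o = fiberCard o') : o = o' := by
  funext i
  have h1 := h.height_le i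
  have h2 := h'.height_le i
  rcases lt_trichotomy (o i) (o' i) with hlt | he | hlt
  · have := h.lt_height hlt (h'.le i)
    rw [← heq] at h2
    omega
  · exact he
  · have := h'.lt_height hlt (h.le i)
    rw [heq] at h1
    omega

lemma exists_isNoncrossing_fiberCard_eq {g : Fin n → ℕ} (hg : IsDominated g)
    (hsum : ∑ j, g j = n) : ∃ o : Fin n → Fin n, IsNoncrossing o ∧ fiberCard o = g := by
  let q : Fin n → ℕ := fun i => Nat.findGreatest (fun j => height g (i + 1) ≤ height g j) i
  have hq_le : ∀ i : Fin n, q i ≤ i := fun i => Nat.findGreatest_le _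
  have hq : ∀ i : Fin n, height g (i + 1) ≤ height g (q i) := fun i =>
    Nat.findGreatest_spec (P := fun j => height g (i + 1) ≤ height g j) (Nat.zero_le _)
      (by rw [height_zero, hsum]; exact hg _ i.2)
  have hq_lt : ∀ i : Fin n, ∀ j, q i < j → j ≤ i → height g j < height g (i + 1) :=
    fun i j h1 h2 => not_le.1 (Nat.findGreatest_is_greatest
      (P := fun j => height g (i + 1) ≤ height g j) h1 h2)
  let o : Fin n → Fin n := fun i => ⟨q i, (hq_le i).trans_lt i.2⟩
  have hfiber : ∀ j, fiberCard o j ≤ g j := by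
    intro j
    have hj := height_succ_add g j
    have h1 : fiberCard o j ≤ (Finset.Icc (height g (j + 1)) (height g j)).card := by
      refine Finset.card_le_card_of_injOn (fun i => height g (i + 1)) (fun i hi => ?_) ?_
      · simp only [Finset.coe_filter, Finset.mem_univ, true_and, Set.mem_ofPred_eq] at hi
        have hqi : q i = j := congrArg Fin.val hi
        simp only [Finset.coe_Icc, Set.mem_Icc]
        refine ⟨?_, hqi ▸ hq i⟩
        have := hq_le i
        rcases eq_or_ne (i : ℕ) j with he | hne
        · rw [he]
        · exact (hq_lt i (j + 1) (by omega) (by omega)).le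
      · have key : ∀ i k : Fin n, o i = j → o k = j → i < k →
            height g (i + 1) < height g (k + 1) := by
          intro i k hi hk hik
          have hqi : q i = j := congrArg Fin.val hi
          have hqk : q k = j := congrArg Fin.val hk
          have := hq_le i
          exact hq_lt k (i + 1) (by omega) hik
        intro i hi k hk hik
        simp only [Finset.coe_filter, Finset.mem_univ, true_and, Set.mem_ofPred_eq] at hi hk hik
        rcases lt_trichotomy i k with hlt | he | hlt
        · exact absurd hik (key i k hi hk hlt).ne
        · exact he
        · exact absurd hik (key k i hk hi hlt).ne'
    rw [Nat.card_Icc] at h1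
    omega
  refine ⟨o, ⟨fun i => hq_le i, fun i k hik hki => ?_⟩, ?_⟩
  · have hik : q i < q k := hik
    have hki : q k ≤ i := hki
    have h1 := hq_lt i (q k) hik hki
    have h2 := hq k
    by_contra! hle
    rcases hle.eq_or_lt with he | hlt
    · subst he; omega
    · have := hq_lt k (i + 1) (by omega) hlt
      omega
  · funext j
    exact (Finset.sum_eq_sum_iff_of_le fun j _ => hfiber j).1
      ((sum_fiberCard o).trans hsum.symm) j (Finset.mem_univ j)

lemma card_isNoncrossing :
    Nat.card {x : (Fin n → Fin n) × Fin n //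
        IsNoncrossing x.1 ∧ (Finset.univ.filter fun i => x.1 i = x.2).card = 4} =
      Nat.card {x : (Fin n → ℕ) × Fin n //
        (∑ j, x.1 j = n ∧ IsDominated x.1) ∧ x.1 x.2 = 4} := by
  refine Nat.card_congr (Equiv.ofBijective
    (fun x => ⟨(fiberCard x.1.1, x.1.2), ⟨sum_fiberCard _, x.2.1.isDominated⟩, x.2.2⟩)
    ⟨?_, ?_⟩)
  · rintro ⟨⟨o, m⟩, ho, hm⟩ ⟨⟨o', m'⟩, ho', hm'⟩ heq
    simp only [Subtype.mk.injEq, Prod.mk.injEq] at heq ⊢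
    exact ⟨ho.eq_of_fiberCard_eq ho' heq.1, heq.2⟩
  · rintro ⟨⟨g, m⟩, ⟨hsum, hg⟩, hm⟩
    obtain ⟨o, ho, rfl⟩ := exists_isNoncrossing_fiberCard_eq hg hsum
    exact ⟨⟨(o, m), ho, hm⟩, rfl⟩

open scoped Classical in
/-- The dominated words of length `m` and sum `p`. -/
noncomputable def dominatedWords (m p : ℕ) : Finset (Fin m → ℕ) :=
  (Finset.Nat.antidiagonalTuple m p).filter IsDominated

lemma mem_dominatedWords {m p : ℕ} {g : Fin m → ℕ} :
    g ∈ dominatedWords m p ↔ ∑ i, g i = p ∧ IsDominated g := by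
  classical
  rw [dominatedWords, Finset.mem_filter, Finset.Nat.mem_antidiagonalTuple]

/-- The total number of letters `4` in the dominated words of length `m` and sum `p`. -/
noncomputable def totalFours (m p : ℕ) : ℕ :=
  ∑ g ∈ dominatedWords m p, (Finset.univ.filter fun j => g j = 4).card

lemma card_marked_words :
    Nat.card {x : (Fin n → ℕ) × Fin n //
        (∑ j, x.1 j = n ∧ IsDominated x.1) ∧ x.1 x.2 = 4} = totalFours n n := by
  rw [totalFours, ← Finset.card_sigma, ← Nat.card_eq_finsetCard]
  refine Nat.card_congr
    ⟨fun x => ⟨⟨x.1.1, x.1.2⟩, ?_⟩, fun x => ⟨(x.1.1, x.1.2), ?_⟩, fun _ => rfl, fun _ => rfl⟩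
  · obtain ⟨hg, hm⟩ := x.2
    exact Finset.mem_sigma.2 ⟨mem_dominatedWords.2 hg, by simpa using hm⟩
  · obtain ⟨hg, hm⟩ := Finset.mem_sigma.1 x.2
    exact ⟨mem_dominatedWords.1 hg, by simpa using hm⟩

lemma isDominated_cons {m : ℕ} (x : ℕ) (g : Fin m → ℕ) :
    IsDominated (Fin.cons x g : Fin (m + 1) → ℕ) ↔ x + ∑ i, g i ≤ m + 1 ∧ IsDominated g := by
  have h0 : height (Fin.cons x g : Fin (m + 1) → ℕ) 0 = x + ∑ i, g i := by
    rw [height_zero, Fin.sum_univ_succ]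
    simp
  have hs : ∀ j, height (Fin.cons x g : Fin (m + 1) → ℕ) (j + 1) = height g j + 1 := by
    intro j
    simp [height, Fin.sum_univ_succ]
    ring
  constructor
  · intro h
    refine ⟨h0 ▸ h 0 (Nat.zero_le _), fun j hj => ?_⟩
    have := h (j + 1) (by omega)
    rw [hs] at this
    omega
  · rintro ⟨h1, h2⟩ (_ | j) hj
    · rw [h0]; exact h1
    · rw [hs]
      have := h2 j (by omega)
      omega

lemma dominatedWords_eq_empty {m p : ℕ} (h : m < p) : dominatedWords m p = ∅ := by
  rw [Finset.eq_empty_iff_forall_notMem]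
  intro g hg
  obtain ⟨rfl, hd⟩ := mem_dominatedWords.1 hg
  have := hd 0 (Nat.zero_le _)
  rw [height_zero] at this
  omega

lemma sum_dominatedWords_succ {m p : ℕ} (h : p ≤ m + 1) (φ : (Fin (m + 1) → ℕ) → ℕ) :
    ∑ g ∈ dominatedWords (m + 1) p, φ g =
      ∑ q ∈ Finset.HasAntidiagonal.antidiagonal p, ∑ g ∈ dominatedWords m q.2, φ (Fin.cons q.1 g) := by
  rw [Finset.sum_sigma']
  refine Finset.sum_bij' (fun g _ => ⟨(g 0, ∑ i, Fin.tail g i), Fin.tail g⟩)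
    (fun x _ => Fin.cons x.1.1 x.2) ?_ ?_ ?_ ?_ ?_
  · intro g hg
    rw [mem_dominatedWords] at hg
    obtain ⟨hsum, hd⟩ := hg
    rw [← Fin.cons_self_tail g, isDominated_cons] at hd
    rw [Fin.sum_univ_succ] at hsum
    simp only [Finset.mem_sigma, Finset.HasAntidiagonal.mem_antidiagonal, mem_dominatedWords]
    exact ⟨hsum, trivial, hd.2⟩
  · rintro ⟨⟨x, q⟩, g⟩ hx
    simp only [Finset.mem_sigma, Finset.HasAntidiagonal.mem_antidiagonal, mem_dominatedWords] at hx
    obtain ⟨hp, hq, hd⟩ := hx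
    rw [mem_dominatedWords, isDominated_cons, Fin.sum_univ_succ]
    simp only [Fin.cons_zero, Fin.cons_succ]
    exact ⟨by omega, by omega, hd⟩
  · intro g _
    exact Fin.cons_self_tail g
  · rintro ⟨⟨x, q⟩, g⟩ hx
    simp only [Finset.mem_sigma, Finset.HasAntidiagonal.mem_antidiagonal, mem_dominatedWords] at hx
    obtain ⟨hp, rfl, hd⟩ := hx
    simp
  · intro g _
    simp

lemma card_dominatedWords_succ {m p : ℕ} (h : p ≤ m + 1) :
    (dominatedWords (m + 1) p).card =
      ∑ q ∈ Finset.HasAntidiagonal.antidiagonal p, (dominatedWords m q.2).card := by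
  simp only [Finset.card_eq_sum_ones]
  exact sum_dominatedWords_succ h _

lemma card_dominatedWords_succ_succ {m p : ℕ} (h : p ≤ m) :
    (dominatedWords (m + 1) (p + 1)).card =
      (dominatedWords m (p + 1)).card + (dominatedWords (m + 1) p).card := by
  rw [card_dominatedWords_succ (by omega), card_dominatedWords_succ (by omega),
    Finset.Nat.sum_antidiagonal_succ]

lemma card_dominatedWords_zero_right (m : ℕ) : (dominatedWords m 0).card = 1 := by
  induction m with
  | zero =>
    rw [Finset.card_eq_one]
    refine ⟨0, ?_⟩
    ext g
    rw [mem_dominatedWords, Subsingleton.elim g 0]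
    simp [IsDominated, height]
  | succ m ih =>
    rw [card_dominatedWords_succ (by omega)]
    simpa using ih

/-- The ballot numbers. -/
lemma card_dominatedWords_add_choose (m p : ℕ) (h : p ≤ m) :
    (dominatedWords m (p + 1)).card + (m + p + 1).choose p = (m + p + 1).choose (p + 1) := by
  induction m generalizing p with
  | zero =>
    obtain rfl : p = 0 := by omega
    simp [dominatedWords_eq_empty]
  | succ m ihm =>
    induction p with
    | zero =>
      have := ihm 0 (by omega)
      rw [card_dominatedWords_succ_succ (by omega), card_dominatedWords_zero_right]
      simp at this ⊢
      omega
    | succ p ihp =>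
      rcases h.eq_or_lt with he | hlt
      · rw [dominatedWords_eq_empty (by omega), Finset.card_empty, zero_add, he]
        exact Nat.choose_symm_of_eq_add (by omega)
      · have h1 := ihp (by omega)
        have h2 := ihm (p + 1) (by omega)
        rw [card_dominatedWords_succ_succ (by omega)]
        have h3 := Nat.choose_succ_succ' (m + p + 2) p
        have h4 := Nat.choose_succ_succ' (m + p + 2) (p + 1)
        rw [show m + 1 + p + 1 = m + p + 2 by ring] at h1
        rw [show m + (p + 1) + 1 = m + p + 2 by ring] at h2
        rw [show m + 1 + (p + 1) + 1 = m + p + 2 + 1 by ring]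
        omega

lemma totalFours_succ {m p : ℕ} (h : p ≤ m + 1) :
    totalFours (m + 1) p = ∑ q ∈ Finset.HasAntidiagonal.antidiagonal p, totalFours m q.2 +
      if 4 ≤ p then (dominatedWords m (p - 4)).card else 0 := by
  have hcons : ∀ (x : ℕ) (g : Fin m → ℕ),
      (Finset.univ.filter fun j => (Fin.cons x g : Fin (m + 1) → ℕ) j = 4).card =
        (Finset.univ.filter fun j => g j = 4).card + if x = 4 then 1 else 0 := by
    intro x g
    simp only [Finset.card_filter, Fin.sum_univ_succ, Fin.cons_zero, Fin.cons_succ]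
    ring
  simp only [totalFours]
  rw [sum_dominatedWords_succ h]
  simp only [hcons, Finset.sum_add_distrib]
  congr 1
  simp only [Finset.sum_const, smul_eq_mul, mul_ite, mul_one, mul_zero]
  rw [← Finset.sum_filter, Finset.HasAntidiagonal.filter_fst_eq_antidiagonal p 4]
  split_ifs <;> simp

lemma totalFours_eq_zero {m p : ℕ} (h : p < 4) : totalFours m p = 0 := by
  refine Finset.sum_eq_zero fun g hg => ?_
  rw [Finset.card_eq_zero, Finset.filter_eq_empty_iff]
  intro j _ hj
  have := Finset.single_le_sum (f := g) (fun i _ => Nat.zero_le _) (Finset.mem_univ j)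
  rw [(mem_dominatedWords.1 hg).1] at this
  omega

lemma totalFours_eq_zero_of_lt {m p : ℕ} (h : m < p) : totalFours m p = 0 := by
  rw [totalFours, dominatedWords_eq_empty h, Finset.sum_empty]

lemma totalFours_succ_four {m : ℕ} (h : 3 ≤ m) :
    totalFours (m + 1) 4 = totalFours m 4 + 1 := by
  rw [totalFours_succ (by omega), Finset.Nat.sum_antidiagonal_succ]
  have : ∑ q ∈ Finset.HasAntidiagonal.antidiagonal 3, totalFours m q.2 = 0 := by
    refine Finset.sum_eq_zero fun q hq => totalFours_eq_zero ?_
    rw [Finset.HasAntidiagonal.mem_antidiagonal] at hq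
    omega
  simp [this, card_dominatedWords_zero_right]

lemma totalFours_succ_succ {m q : ℕ} (h : q + 4 ≤ m) :
    totalFours (m + 1) (q + 5) + (dominatedWords m q).card =
      totalFours (m + 1) (q + 4) + totalFours m (q + 5) + (dominatedWords m (q + 1)).card := by
  rw [totalFours_succ (by omega), totalFours_succ (by omega), Finset.Nat.sum_antidiagonal_succ]
  simp only [Nat.le_add_left, if_true, Nat.add_sub_cancel]
  rw [show q + 5 - 4 = q + 1 by omega]
  ring

lemma totalFours_eq (m q : ℕ) (h : q + 2 ≤ m) :
    (totalFours (m + 1) (q + 4) : ℤ) = (m - q - 2) * (m + q).choose q := by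
  induction m generalizing q with
  | zero => omega
  | succ m ihm =>
    induction q with
    | zero =>
      rcases h.eq_or_lt with he | hlt
      · obtain rfl : m = 1 := by omega
        simp [totalFours_eq_zero_of_lt]
      · have := ihm 0 (by omega)
        rw [totalFours_succ_four (by omega)]
        push_cast at this ⊢
        simp at this ⊢
        rw [this]
        ring
    | succ q ihq =>
      rcases h.eq_or_lt with he | hlt
      · rw [totalFours_eq_zero_of_lt (by omega)]
        obtain rfl : m = q + 2 := by omega
        push_cast
        ring
      · have h1 := ihm (q + 1) (by omega)
        have h2 := ihq (by omega)
        have h3 := totalFours_succ_succ (m := m + 1) (q := q) (by omega)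
        have h4 := card_dominatedWords_succ_succ (m := m) (p := q) (by omega)
        have h5 := card_dominatedWords_add_choose m q (by omega)
        have h6 := Nat.choose_succ_succ' (m + q + 1) q
        rw [show m + (q + 1) = m + q + 1 by ring] at h1
        rw [show m + 1 + q = m + q + 1 by ring] at h2
        rw [show m + 1 + (q + 1) = m + q + 1 + 1 by ring, h6]
        zify at h3 h4 h5
        push_cast at h1 h2 ⊢
        rw [show q + 1 + 4 = q + 5 by ring] at h1 ⊢
        linear_combination h3 + h1 + h2 + h4 + h5

end CircleCrossings

/-- The number of partitions of `n` labeled points on a circle having exactly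
one crossing (counted with multiplicity) equals `binom(2n−5, n−4)` for every
`n ≥ 4`. -/
theorem card_partitions_one_crossing (n : ℕ) (hn : 4 ≤ n) :
    Nat.card {P : Finpartition (Finset.univ : Finset (Fin n)) // crossNumPart P = 1} =
      Nat.choose (2 * n - 5) (n - 4) := by
  rw [CircleCrossings.card_crossNumPart_eq_one, CircleCrossings.card_isNoncrossing,
    CircleCrossings.card_marked_words]
  obtain ⟨q, rfl⟩ := Nat.exists_eq_add_of_le' hn
  have h := CircleCrossings.totalFours_eq (q + 3) q (by omega)
  rw [show 2 * (q + 4) - 5 = q + 3 + q by omega, Nat.add_sub_cancel]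
  zify
  rw [show q + 4 = q + 3 + 1 by ring] at h ⊢
  rw [h]
  push_cast
  ring
end

section
/- The generating function D0(x,y) of crossing-free chord diagrams on a circle (x marks vertices, y marks chords, isolated vertices allowed) satisfies the algebraic equation y·D0² + (x²(1+y) − x(1+2y) − 2y)·D0 + x(1+2y) + y = 0. -/
open MvPowerSeries

/-- A chord diagram on the `n` labeled points `0, …, n−1` of a circle is a set
of chords, each recorded with its endpoints in increasing order; isolated
vertices are allowed, chords may share endpoints, but there are no repeated
chords. `IsDiagram D` states that the chords are correctly normalized. -/
def IsDiagram {n : ℕ} (D : Finset (Fin n × Fin n)) : Prop :=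
  ∀ p ∈ D, p.1 < p.2

/-- The generating function `D₀(x,y)` of crossing-free chord diagrams on a
circle, where `x` (variable `0`) marks vertices and `y` (variable `1`) marks
chords. -/
noncomputable def diagGF0 : MvPowerSeries (Fin 2) ℚ :=
  fun e => (Nat.card {D : Finset (Fin (e 0) × Fin (e 0)) //
    IsDiagram D ∧ crossNum D = 0 ∧ D.card = e 1} : ℚ)

/-- The crossing-free sets of chords on the vertices `a, a + 1, …, b - 1`. -/
def crossingFreeDiagrams (a b : ℕ) : Finset (Finset (ℕ × ℕ)) :=
  ((Finset.Ico a b ×ˢ Finset.Ico a b).filter fun p => p.1 < p.2).powerset.filter fun D =>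
    ∀ p ∈ D, ∀ q ∈ D, ¬ (p.1 < q.1 ∧ q.1 < p.2 ∧ p.2 < q.2)

theorem mem_crossingFreeDiagrams {a b : ℕ} {D : Finset (ℕ × ℕ)} :
    D ∈ crossingFreeDiagrams a b ↔ (∀ p ∈ D, a ≤ p.1 ∧ p.1 < p.2 ∧ p.2 < b) ∧
      ∀ p ∈ D, ∀ q ∈ D, ¬ (p.1 < q.1 ∧ q.1 < p.2 ∧ p.2 < q.2) := by
  simp only [crossingFreeDiagrams, Finset.mem_filter, Finset.mem_powerset, Finset.subset_iff,
    Finset.mem_product, Finset.mem_Ico]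
  refine and_congr_left fun _ => forall₂_congr fun p _ => ?_
  omega

section Weight

variable {A : Type*} [CommRing A] (y : A)

/-- The sum of `y ^ (number of chords)` over the crossing-free diagrams on `a, …, b - 1`. -/
def diagramWeight (a b : ℕ) : A :=
  ∑ D ∈ crossingFreeDiagrams a b, y ^ D.card

/-- As `diagramWeight y a (b + 1)`, restricted to the diagrams without the chord `(a, b)`. -/
def openWeight (a b : ℕ) : A :=
  ∑ D ∈ crossingFreeDiagrams a (b + 1) with (a, b) ∉ D, y ^ D.card

/-- As `diagramWeight y a b`, restricted to the diagrams in which all neighbours of `a`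
are at most `c`. -/
def boundedWeight (a b c : ℕ) : A :=
  ∑ D ∈ crossingFreeDiagrams a b with ∀ p ∈ D, p.1 = a → p.2 ≤ c, y ^ D.card

theorem diagramWeight_of_le {a b : ℕ} (h : b ≤ a + 1) : diagramWeight y a b = 1 := by
  have : crossingFreeDiagrams a b = {∅} := by
    ext D
    rw [mem_crossingFreeDiagrams, Finset.mem_singleton]
    constructor
    · rintro ⟨h1, -⟩
      refine Finset.eq_empty_of_forall_notMem fun p hp => ?_
      have := h1 p hp
      omega
    · rintro rfl
      simp
  simp [diagramWeight, this]

theorem diagramWeight_add_right (a b c : ℕ) :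
    diagramWeight y (a + c) (b + c) = diagramWeight y a b := by
  let e : ℕ × ℕ ↪ ℕ × ℕ := (addRightEmbedding c).prodMap (addRightEmbedding c)
  have he : ∀ p, e p = (p.1 + c, p.2 + c) := fun p => rfl
  symm
  refine Finset.sum_bij (fun D _ => D.map e) ?_ ?_ ?_ ?_
  · intro D hD
    rw [mem_crossingFreeDiagrams] at hD ⊢
    simp only [Finset.forall_mem_map, he]
    refine ⟨fun p hp => ?_, fun p hp q hq => ?_⟩
    · have := hD.1 p hp
      omega
    · have := hD.2 p hp q hq
      omega
  · intro D _ E _ h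
    exact Finset.map_injective e h
  · intro E hE
    rw [mem_crossingFreeDiagrams] at hE
    have hsub : (E : Set (ℕ × ℕ)) ⊆ Set.range e := by
      intro p hp
      have := hE.1 p hp
      exact ⟨(p.1 - c, p.2 - c), by rw [he]; ext <;> simp <;> omega⟩
    obtain ⟨D, rfl⟩ : ∃ D : Finset _, D.map e = E :=
      ⟨E.preimage e e.injective.injOn, by
        classical
        rw [Finset.map_eq_image, Finset.image_preimage, Finset.filter_true_of_mem hsub]⟩
    simp only [Finset.forall_mem_map, he] at hE
    refine ⟨D, ?_, rfl⟩
    rw [mem_crossingFreeDiagrams]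
    refine ⟨fun p hp => ?_, fun p hp q hq => ?_⟩
    · have := hE.1 p hp
      omega
    · have := hE.2 p hp q hq
      omega
  · intro D _
    rw [Finset.card_map]

theorem diagramWeight_eq_one_add_mul_openWeight {a b : ℕ} (h : a < b) :
    diagramWeight y a (b + 1) = (1 + y) * openWeight y a b := by
  rw [diagramWeight, ← Finset.sum_filter_not_add_sum_filter _ (fun D => (a, b) ∈ D), add_mul,
    one_mul, openWeight]
  congr 1
  rw [Finset.mul_sum]
  refine Finset.sum_bij' (fun D _ => D.erase (a, b)) (fun D _ => insert (a, b) D) ?_ ?_ ?_ ?_ ?_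
  · intro D hD
    simp only [Finset.mem_filter, mem_crossingFreeDiagrams] at hD ⊢
    refine ⟨⟨fun p hp => hD.1.1 p (Finset.mem_of_mem_erase hp), fun p hp q hq =>
      hD.1.2 p (Finset.mem_of_mem_erase hp) q (Finset.mem_of_mem_erase hq)⟩, by simp⟩
  · intro D hD
    simp only [Finset.mem_filter, mem_crossingFreeDiagrams] at hD ⊢
    obtain ⟨⟨h1, h2⟩, -⟩ := hD
    refine ⟨⟨?_, ?_⟩, by simp⟩
    · rw [Finset.forall_mem_insert]
      exact ⟨by simp; omega, h1⟩
    · simp only [Finset.forall_mem_insert]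
      refine ⟨⟨by simp, fun q hq => ?_⟩, fun p hp => ⟨?_, h2 p hp⟩⟩
      · have := h1 q hq
        omega
      · have := h1 p hp
        omega
  · intro D hD
    exact Finset.insert_erase (Finset.mem_filter.1 hD).2
  · intro D hD
    exact Finset.erase_insert (Finset.mem_filter.1 hD).2
  · intro D hD
    rw [← Finset.card_erase_add_one (Finset.mem_filter.1 hD).2, pow_succ']

theorem boundedWeight_self (a b : ℕ) : boundedWeight y a b a = diagramWeight y (a + 1) b := by
  refine Finset.sum_congr ?_ fun _ _ => rfl
  ext D
  simp only [Finset.mem_filter, mem_crossingFreeDiagrams]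
  constructor
  · rintro ⟨⟨h1, h2⟩, h3⟩
    refine ⟨fun p hp => ?_, h2⟩
    have := h1 p hp
    have := h3 p hp
    omega
  · rintro ⟨h1, h2⟩
    refine ⟨⟨fun p hp => ?_, h2⟩, fun p hp => ?_⟩ <;>
    · have := h1 p hp
      omega

theorem boundedWeight_eq_diagramWeight (a b : ℕ) :
    boundedWeight y a (b + 1) b = diagramWeight y a (b + 1) := by
  refine Finset.sum_congr (Finset.filter_true_of_mem fun D hD p hp _ => ?_) fun _ _ => rfl
  have := (mem_crossingFreeDiagrams.1 hD).1 p hp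
  omega

theorem boundedWeight_succ {a b c : ℕ} (hac : a ≤ c) (hcb : c + 1 < b) :
    boundedWeight y a b (c + 1) =
      boundedWeight y a b c + y * openWeight y a (c + 1) * diagramWeight y (c + 1) b := by
  rw [boundedWeight, ← Finset.sum_filter_not_add_sum_filter _ (fun D => (a, c + 1) ∈ D)]
  congr 1
  · refine Finset.sum_congr ?_ fun _ _ => rfl
    ext D
    simp only [Finset.mem_filter, and_assoc]
    refine and_congr_right fun _ => ⟨fun ⟨h1, h2⟩ p hp hpa => ?_, fun h => ⟨fun p hp hpa => ?_,
      fun hD => ?_⟩⟩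
    · refine Nat.le_of_lt_succ (lt_of_le_of_ne (h1 p hp hpa) fun hpc => h2 ?_)
      rwa [← Nat.succ_eq_add_one, ← hpa, ← hpc]
    · exact (h p hp hpa).trans c.le_succ
    · have := h _ hD rfl
      simp at this
  · rw [mul_assoc, openWeight, diagramWeight, Finset.sum_mul_sum, ← Finset.sum_product',
      Finset.mul_sum]
    refine Finset.sum_bij' (fun D _ => ((D.erase (a, c + 1)).filter fun p => p.2 ≤ c + 1,
      D.filter fun p => c + 1 ≤ p.1)) (fun E _ => insert (a, c + 1) (E.1 ∪ E.2)) ?_ ?_ ?_ ?_ ?_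
    · intro D hD
      simp only [Finset.mem_product, Finset.mem_filter, mem_crossingFreeDiagrams,
        Finset.mem_erase] at hD ⊢
      obtain ⟨⟨⟨h1, h2⟩, -⟩, -⟩ := hD
      refine ⟨⟨⟨fun p hp => ?_, fun p hp q hq => h2 p hp.1.2 q hq.1.2⟩, by simp⟩,
        fun p hp => ?_, fun p hp q hq => h2 p hp.1 q hq.1⟩
      · have := h1 p hp.1.2
        omega
      · have := h1 p hp.1
        omega
    · rintro ⟨E, F⟩ hEF
      simp only [Finset.mem_product, Finset.mem_filter, mem_crossingFreeDiagrams] at hEF ⊢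
      obtain ⟨⟨⟨hE1, hE2⟩, hE3⟩, hF1, hF2⟩ := hEF
      have hEF : ∀ p ∈ insert (a, c + 1) (E ∪ F), (p.1 = a ∧ p.2 = c + 1) ∨
          (p ∈ E ∧ a ≤ p.1 ∧ p.1 < p.2 ∧ p.2 < c + 1 + 1) ∨
          (p ∈ F ∧ c + 1 ≤ p.1 ∧ p.1 < p.2 ∧ p.2 < b) := by
        intro p hp
        rw [Finset.mem_insert, Finset.mem_union] at hp
        rcases hp with rfl | hp | hp
        · exact .inl ⟨rfl, rfl⟩
        · exact .inr (.inl ⟨hp, hE1 p hp⟩)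
        · exact .inr (.inr ⟨hp, hF1 p hp⟩)
      refine ⟨⟨⟨fun p hp => ?_, fun p hp q hq => ?_⟩, fun p hp hpa => ?_⟩,
        Finset.mem_insert_self _ _⟩
      · have := hEF p hp
        omega
      · rcases hEF p hp with hp' | ⟨hpE, hp'⟩ | ⟨hpF, hp'⟩ <;>
          rcases hEF q hq with hq' | ⟨hqE, hq'⟩ | ⟨hqF, hq'⟩
        case inr.inl.inr.inl => exact hE2 p hpE q hqE
        case inr.inr.inr.inr => exact hF2 p hpF q hqF
        all_goals omega
      · have := hEF p hp
        omega
    · intro D hD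
      simp only [Finset.mem_filter, mem_crossingFreeDiagrams] at hD
      obtain ⟨⟨⟨h1, h2⟩, h3⟩, h4⟩ := hD
      ext p
      simp only [Finset.mem_insert, Finset.mem_union, Finset.mem_filter, Finset.mem_erase]
      by_cases hp : p = (a, c + 1)
      · simp [hp, h4]
      · simp only [hp, false_or, ne_eq, not_false_eq_true, true_and, ← and_or_left, and_iff_left_iff_imp]
        intro hpD
        have h5 := h1 p hpD
        have h6 := h2 (a, c + 1) h4 p hpD
        have h7 := h3 p hpD
        simp only at h6
        omega
    · rintro ⟨E, F⟩ hEF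
      simp only [Finset.mem_product, Finset.mem_filter, mem_crossingFreeDiagrams] at hEF
      obtain ⟨⟨⟨hE1, hE2⟩, hE3⟩, hF1, hF2⟩ := hEF
      refine Prod.ext (Finset.ext fun p => ?_) (Finset.ext fun p => ?_) <;>
      · simp only [Finset.mem_insert, Finset.mem_union, Finset.mem_filter, Finset.mem_erase]
        have h1 := hE1 p
        have h2 := hF1 p
        have h3 : p = (a, c + 1) → p ∉ E ∧ p.1 = a := by
          rintro rfl
          exact ⟨hE3, rfl⟩
        have h4 : p ∈ E → p.1 ≠ c + 1 := fun hp => by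
          have := h1 hp
          omega
        grind
    · intro D hD
      simp only [Finset.mem_filter, mem_crossingFreeDiagrams] at hD
      obtain ⟨⟨⟨h1, h2⟩, h3⟩, h4⟩ := hD
      have hF : D.filter (fun p => c + 1 ≤ p.1) =
          (D.erase (a, c + 1)).filter (fun p => ¬ p.2 ≤ c + 1) := by
        ext p
        simp only [Finset.mem_filter, Finset.mem_erase]
        have h5 := h1 p
        have h6 := h2 (a, c + 1) h4 p
        have h7 := h3 p
        have h8 : p = (a, c + 1) → p.1 = a ∧ p.2 = c + 1 := by
          rintro rfl
          exact ⟨rfl, rfl⟩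
        simp only at h6
        grind
      rw [← Finset.card_erase_add_one h4, pow_succ', ← pow_add]
      simp only [hF]
      rw [Finset.card_filter_add_card_filter_not]

theorem boundedWeight_eq_sum (a b k : ℕ) (h : a + k < b) :
    boundedWeight y a b (a + k) = diagramWeight y (a + 1) b +
      ∑ i ∈ Finset.range k, y * openWeight y a (a + i + 1) * diagramWeight y (a + i + 1) b := by
  induction k with
  | zero => simp [boundedWeight_self]
  | succ k ih =>
    rw [Finset.sum_range_succ, ← add_assoc, ← add_assoc, ← ih (by omega),
      boundedWeight_succ y (by omega) (by omega)]

theorem diagramWeight_recurrence (n : ℕ) :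
    (1 + y) * diagramWeight y 0 (n + 1 + 1) = (1 + y) * diagramWeight y 0 (n + 1) +
      ∑ i ∈ Finset.range (n + 1),
        y * diagramWeight y 0 (i + 1 + 1) * diagramWeight y 0 (n - i + 1) := by
  have h := boundedWeight_eq_sum y 0 (n + 1 + 1) (n + 1) (by omega)
  rw [zero_add, boundedWeight_eq_diagramWeight, diagramWeight_add_right] at h
  rw [h, mul_add, Finset.mul_sum]
  refine congrArg _ (Finset.sum_congr rfl fun i hi => ?_)
  have hi' := Finset.mem_range.1 hi
  rw [diagramWeight_eq_one_add_mul_openWeight y (show 0 < i + 1 by omega), zero_add,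
    show n + 1 + 1 = (n - i + 1) + (i + 1) by omega]
  nth_rw 2 [← zero_add (i + 1)]
  rw [diagramWeight_add_right]
  ring

theorem diagramWeight_generating_function :
    PowerSeries.C y * (PowerSeries.mk fun n => diagramWeight y 0 n) ^ 2 +
      (PowerSeries.X ^ 2 * (1 + PowerSeries.C y) - PowerSeries.X * (1 + 2 * PowerSeries.C y) - 2 * PowerSeries.C y) *
        (PowerSeries.mk fun n => diagramWeight y 0 n) +
      PowerSeries.X * (1 + 2 * PowerSeries.C y) + PowerSeries.C y = 0 := by
  set P : PowerSeries A := PowerSeries.mk fun n => diagramWeight y 0 (n + 1) with hP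
  have hF : (PowerSeries.mk fun n => diagramWeight y 0 n) = 1 + PowerSeries.X * P := by
    ext n
    cases n with
    | zero => simp [diagramWeight_of_le]
    | succ n => simp [hP, PowerSeries.coeff_succ_X_mul, PowerSeries.coeff_one]
  have key : PowerSeries.C y * (P * P) + PowerSeries.C (1 + y) * (1 + PowerSeries.X * P) - PowerSeries.C (1 + 2 * y) * P = 0 := by
    ext n
    cases n with
    | zero =>
      simp [hP, diagramWeight_of_le]
      ring
    | succ n =>
      have h := diagramWeight_recurrence y n
      simp only [mul_assoc, ← Finset.mul_sum] at h
      rw [map_sub, map_add, PowerSeries.coeff_C_mul, PowerSeries.coeff_C_mul,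
        PowerSeries.coeff_C_mul, map_add, PowerSeries.coeff_one, if_neg n.succ_ne_zero,
        PowerSeries.coeff_succ_X_mul, PowerSeries.coeff_mul,
        Finset.Nat.sum_antidiagonal_eq_sum_range_succ_mk, Finset.sum_range_succ']
      simp only [hP, PowerSeries.coeff_mk, Nat.add_sub_add_right, Nat.sub_zero,
        diagramWeight_of_le y (le_refl (0 + 1)), map_zero]
      linear_combination -h
  rw [hF]
  simp only [map_add, map_mul, map_one, map_ofNat] at key
  linear_combination PowerSeries.X ^ 2 * key

end Weight

theorem card_diagrams (n m : ℕ) :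
    Nat.card {D : Finset (Fin n × Fin n) // IsDiagram D ∧ crossNum D = 0 ∧ D.card = m} =
      ((crossingFreeDiagrams 0 n).filter fun D => D.card = m).card := by
  classical
  let e : Fin n × Fin n ↪ ℕ × ℕ := Fin.valEmbedding.prodMap Fin.valEmbedding
  have he : ∀ p, e p = ((p.1 : ℕ), (p.2 : ℕ)) := fun p => rfl
  have key : ∀ D : Finset (Fin n × Fin n), D.map e ∈ crossingFreeDiagrams 0 n ↔
      IsDiagram D ∧ crossNum D = 0 := by
    intro D
    rw [mem_crossingFreeDiagrams, crossNum, Finset.card_eq_zero, Finset.filter_eq_empty_iff]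
    simp only [Finset.forall_mem_map, he, IsDiagram, Interleaves, Finset.mem_product,
      Fin.val_fin_lt]
    exact and_congr
      ⟨fun h p hp => (h p hp).2.1, fun h p hp => ⟨Nat.zero_le _, h p hp, p.2.isLt⟩⟩
      ⟨fun h pq hpq => h pq.1 hpq.1 pq.2 hpq.2, fun h p hp q hq => @h (p, q) ⟨hp, hq⟩⟩
  rw [Nat.subtype_card (Finset.univ.filter fun D : Finset (Fin n × Fin n) =>
    IsDiagram D ∧ crossNum D = 0 ∧ D.card = m) (by simp)]
  refine Finset.card_bij (fun D _ => D.map e) ?_ ?_ ?_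
  · intro D hD
    rw [Finset.mem_filter, key, Finset.card_map, and_assoc]
    exact (Finset.mem_filter.1 hD).2
  · intro D _ E _ h
    exact Finset.map_injective e h
  · intro E hE
    have hsub : (E : Set (ℕ × ℕ)) ⊆ Set.range e := by
      intro p hp
      have := (mem_crossingFreeDiagrams.1 (Finset.mem_filter.1 hE).1).1 p hp
      exact ⟨(⟨p.1, by omega⟩, ⟨p.2, by omega⟩), rfl⟩
    obtain ⟨D, rfl⟩ : ∃ D : Finset _, D.map e = E :=
      ⟨E.preimage e e.injective.injOn, by
        classical
        rw [Finset.map_eq_image, Finset.image_preimage, Finset.filter_true_of_mem hsub]⟩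
    rw [Finset.mem_filter, key, Finset.card_map, and_assoc] at hE
    exact ⟨D, by simpa using hE, rfl⟩

theorem finSuccEquiv_diagGF0 :
    MvPowerSeries.finSuccEquiv ℚ 1 diagGF0 =
      PowerSeries.mk fun n => diagramWeight (MvPowerSeries.X 0 : MvPowerSeries (Fin 1) ℚ) 0 n := by
  ext n x
  rw [MvPowerSeries.coeff_coeff_finSuccEquiv, PowerSeries.coeff_mk, diagramWeight, map_sum]
  simp only [MvPowerSeries.coeff_X_pow]
  have hx : ∀ m : ℕ, x = Finsupp.single 0 m ↔ m = x 0 := fun m => by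
    rw [Finsupp.ext_iff, Fin.forall_fin_one, Finsupp.single_eq_same, eq_comm]
  simp only [hx, Finset.sum_boole]
  rw [← card_diagrams]
  rfl

/-- The generating function `D₀(x,y)` of crossing-free chord diagrams on a
circle satisfies `y·D₀² + (x²(1+y) − x(1+2y) − 2y)·D₀ + x(1+2y) + y = 0`. -/
theorem diagGF0_algebraic_equation :
    (MvPowerSeries.X 1 : MvPowerSeries (Fin 2) ℚ) * diagGF0 ^ 2 +
      (MvPowerSeries.X 0 ^ 2 * (1 + MvPowerSeries.X 1) -
        MvPowerSeries.X 0 * (1 + 2 * MvPowerSeries.X 1) - 2 * MvPowerSeries.X 1) * diagGF0 +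
      MvPowerSeries.X 0 * (1 + 2 * MvPowerSeries.X 1) + MvPowerSeries.X 1 = 0 := by
  have h0 : MvPowerSeries.finSuccEquiv ℚ 1 (MvPowerSeries.X 0) = PowerSeries.X :=
    MvPowerSeries.finSuccEquiv_X_zero
  have h1 : MvPowerSeries.finSuccEquiv ℚ 1 (MvPowerSeries.X 1) =
      PowerSeries.C (MvPowerSeries.X 0) :=
    MvPowerSeries.finSuccEquiv_X_succ 0
  apply (MvPowerSeries.finSuccEquiv ℚ 1).injective
  simp only [map_add, map_sub, map_mul, map_pow, map_one, map_ofNat, map_zero, h0, h1,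
    finSuccEquiv_diagGF0]
  exact diagramWeight_generating_function _
end

section
/- The generating function C(x,y) of connected crossing-free chord diagrams (connected as graphs, x marking vertices and y marking chords) satisfies y·C³ + y·C² − x(1+2y)·C + x²(1+y) = 0. -/
open MvPowerSeries

/-- The graph on the `n` points of the circle whose edges are the chords of the
diagram `D`. -/
def diagGraph {n : ℕ} (D : Finset (Fin n × Fin n)) : SimpleGraph (Fin n) :=
  SimpleGraph.fromRel (fun a b => (a, b) ∈ D)

/-- The generating function `C(x,y)` of connected crossing-free chord diagrams
(connected as graphs; a single isolated vertex is connected), where `x`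
(variable `0`) marks vertices and `y` (variable `1`) marks chords. -/
noncomputable def connDiagGF0 : MvPowerSeries (Fin 2) ℚ :=
  fun e => (Nat.card {D : Finset (Fin (e 0) × Fin (e 0)) //
    IsDiagram D ∧ crossNum D = 0 ∧ D.card = e 1 ∧ (diagGraph D).Connected} : ℚ)

/-- `D` is a set of pairwise noncrossing chords on the points `a, a + 1, …, b` whose graph is
connected: no set of points closed under adjacency separates two points of `[a, b]`. -/
def IsConnDiag (a b : ℕ) (D : Finset (ℕ × ℕ)) : Prop :=
  (∀ p ∈ D, a ≤ p.1 ∧ p.1 < p.2 ∧ p.2 ≤ b) ∧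
  (∀ p ∈ D, ∀ q ∈ D, ¬ (p.1 < q.1 ∧ q.1 < p.2 ∧ p.2 < q.2)) ∧
  ∀ S : Set ℕ, (∀ p ∈ D, p.1 ∈ S ↔ p.2 ∈ S) →
    ∀ u v, a ≤ u → u ≤ b → a ≤ v → v ≤ b → u ∈ S → v ∈ S

/-- To check connectedness it suffices to propagate from one base point. -/
theorem preconnected_of_base {a b c : ℕ} {D : Finset (ℕ × ℕ)}
    (h : ∀ S : Set ℕ, (∀ p ∈ D, p.1 ∈ S ↔ p.2 ∈ S) → c ∈ S → ∀ v, a ≤ v → v ≤ b → v ∈ S)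
    (S : Set ℕ) (hS : ∀ p ∈ D, p.1 ∈ S ↔ p.2 ∈ S) (u v : ℕ) (hau : a ≤ u) (hub : u ≤ b)
    (hav : a ≤ v) (hvb : v ≤ b) (hu : u ∈ S) : v ∈ S := by
  by_cases hc : c ∈ S
  · exact h S hS hc v hav hvb
  · exact absurd hu (h Sᶜ (fun p hp => not_congr (hS p hp)) hc u hau hub)

open Classical in
/-- The finset of connected noncrossing diagrams on `[a, b]`. -/
noncomputable def connDiags (a b : ℕ) : Finset (Finset (ℕ × ℕ)) :=
  (Finset.Icc a b ×ˢ Finset.Icc a b).powerset.filter (IsConnDiag a b)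

theorem mem_connDiags {a b : ℕ} {D : Finset (ℕ × ℕ)} :
    D ∈ connDiags a b ↔ IsConnDiag a b D := by
  simp only [connDiags, Finset.mem_filter, Finset.mem_powerset, and_iff_right_iff_imp]
  intro h p hp
  have := h.1 p hp
  simp only [Finset.mem_product, Finset.mem_Icc]
  omega

/-- The connected noncrossing diagrams on `[a, b]` that contain the chord `(a, b)`. -/
noncomputable def chordDiags (a b : ℕ) : Finset (Finset (ℕ × ℕ)) :=
  (connDiags a b).filter ((a, b) ∈ ·)

theorem mem_chordDiags {a b : ℕ} {D : Finset (ℕ × ℕ)} :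
    D ∈ chordDiags a b ↔ IsConnDiag a b D ∧ (a, b) ∈ D := by
  simp [chordDiags, mem_connDiags]

/-- Gluing a diagram containing the chord `(a, v)` to a diagram on `[v, b]`. -/
theorem IsConnDiag.union {a v b : ℕ} {D₁ D₂ : Finset (ℕ × ℕ)} (hav : a ≤ v) (hvb : v ≤ b)
    (h₁ : IsConnDiag a v D₁) (h₂ : IsConnDiag v b D₂) : IsConnDiag a b (D₁ ∪ D₂) := by
  refine ⟨fun p hp => ?_, fun p hp q hq => ?_,
    preconnected_of_base (c := v) fun S hS hv u hau hub => ?_⟩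
  · rcases Finset.mem_union.1 hp with hp | hp
    · have := h₁.1 p hp; omega
    · have := h₂.1 p hp; omega
  · rcases Finset.mem_union.1 hp with hp | hp <;> rcases Finset.mem_union.1 hq with hq | hq
    · exact h₁.2.1 p hp q hq
    · have := h₁.1 p hp; have := h₂.1 q hq; omega
    · have := h₂.1 p hp; have := h₁.1 q hq; omega
    · exact h₂.2.1 p hp q hq
  · rcases le_total u v with huv | huv
    · exact h₁.2.2 S (fun p hp => hS p (Finset.mem_union_left _ hp)) v u hav le_rfl hau huv hv
    · exact h₂.2.2 S (fun p hp => hS p (Finset.mem_union_right _ hp)) v u le_rfl hvb huv hub hv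

/-- If no chord passes strictly over `v`, the part of a connected diagram to the left of `v`
is connected. -/
theorem IsConnDiag.filter_left {a v b : ℕ} {D : Finset (ℕ × ℕ)} (hvb : v ≤ b)
    (h : IsConnDiag a b D) (hv : ∀ p ∈ D, p.2 ≤ v ∨ v ≤ p.1) :
    IsConnDiag a v (D.filter fun p => p.2 ≤ v) := by
  refine ⟨fun p hp => ?_, fun p hp q hq => ?_,
    preconnected_of_base (c := v) fun S hS hvS u hau huv => ?_⟩
  · rw [Finset.mem_filter] at hp
    have := h.1 p hp.1; omega
  · exact h.2.1 p (Finset.mem_filter.1 hp).1 q (Finset.mem_filter.1 hq).1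
  · have key := h.2.2 (S ∪ {u | v ≤ u}) ?_ v u (hau.trans huv) hvb hau (huv.trans hvb) (.inl hvS)
    · rcases key with key | key
      · exact key
      · rwa [le_antisymm huv key]
    · intro p hp
      have hlt := h.1 p hp
      simp only [Set.mem_union, Set.mem_ofPred_eq]
      rcases hv p hp with hp2 | hp1
      · have := hS p (Finset.mem_filter.2 ⟨hp, hp2⟩)
        rcases hp2.eq_or_lt with heq | hlt'
        · rw [heq] at this ⊢; simp [this, hvS]
        · rw [this]; simp [not_le.2 hlt', not_le.2 (hlt.2.1.trans hlt')]
      · simp [hp1, hp1.trans hlt.2.1.le]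

/-- If no chord passes strictly over `v`, the part of a connected diagram to the right of `v`
is connected. -/
theorem IsConnDiag.filter_right {a v b : ℕ} {D : Finset (ℕ × ℕ)} (hav : a ≤ v)
    (h : IsConnDiag a b D) (hv : ∀ p ∈ D, p.2 ≤ v ∨ v ≤ p.1) :
    IsConnDiag v b (D.filter fun p => v ≤ p.1) := by
  refine ⟨fun p hp => ?_, fun p hp q hq => ?_,
    preconnected_of_base (c := v) fun S hS hvS u hvu hub => ?_⟩
  · rw [Finset.mem_filter] at hp
    have := h.1 p hp.1; omega
  · exact h.2.1 p (Finset.mem_filter.1 hp).1 q (Finset.mem_filter.1 hq).1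
  · have key := h.2.2 (S ∪ {u | u ≤ v}) ?_ v u hav (hvu.trans hub) (hav.trans hvu) hub (.inl hvS)
    · rcases key with key | key
      · exact key
      · rwa [le_antisymm key hvu]
    · intro p hp
      have hlt := h.1 p hp
      simp only [Set.mem_union, Set.mem_ofPred_eq]
      rcases hv p hp with hp2 | hp1
      · simp [hp2, hlt.2.1.le.trans hp2]
      · have := hS p (Finset.mem_filter.2 ⟨hp, hp1⟩)
        rcases hp1.eq_or_lt with heq | hlt'
        · rw [← heq] at this ⊢; simp [← this, hvS]
        · rw [this]; simp [not_le.2 hlt', not_le.2 (hlt'.trans hlt.2.1)]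

/-- In a connected diagram on at least two points, the farthest neighbour `v` of the first point
has no chord passing strictly over it. -/
theorem IsConnDiag.exists_farthest {a b : ℕ} {D : Finset (ℕ × ℕ)} (hab : a < b)
    (h : IsConnDiag a b D) : ∃ v, a < v ∧ v ≤ b ∧ (a, v) ∈ D ∧ ∀ p ∈ D, p.2 ≤ v ∨ v ≤ p.1 := by
  have hne : ((Finset.Icc a b).filter fun v => (a, v) ∈ D).Nonempty := by
    by_contra hne
    rw [Finset.not_nonempty_iff_eq_empty, Finset.filter_eq_empty_iff] at hne
    have := h.2.2 {a} ?_ a b le_rfl hab.le hab.le le_rfl rfl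
    · exact hab.ne' this
    · rintro ⟨p, q⟩ hp
      have h1 := h.1 _ hp
      have h2 : q ≠ a := by dsimp at h1; omega
      have h3 : p ≠ a := by
        rintro rfl
        exact hne (Finset.mem_Icc.2 (by dsimp at h1; omega)) hp
      simp [h2, h3]
  obtain ⟨v, hmem, hmax⟩ := Finset.exists_max_image _ id hne
  rw [Finset.mem_filter] at hmem
  have hv := h.1 _ hmem.2
  dsimp at hv
  refine ⟨v, hv.2.1, hv.2.2, hmem.2, ?_⟩
  rintro ⟨p, q⟩ hp
  have h1 := h.1 _ hp
  have h2 := h.2.1 _ hmem.2 _ hp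
  dsimp at h1 h2 ⊢
  by_contra hcon
  have hpa : p = a := by omega
  subst hpa
  have : q ≤ v := hmax q (Finset.mem_filter.2 ⟨Finset.mem_Icc.2 (by omega), hp⟩)
  omega

theorem IsConnDiag.filter_union_left {a c d b : ℕ} {D₁ D₂ : Finset (ℕ × ℕ)} (hcd : c ≤ d)
    (h₁ : IsConnDiag a c D₁) (h₂ : IsConnDiag d b D₂) :
    (D₁ ∪ D₂).filter (fun p => p.2 ≤ c) = D₁ := by
  ext p
  have := h₁.1 p
  have := h₂.1 p
  simp only [Finset.mem_filter, Finset.mem_union]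
  grind

theorem IsConnDiag.filter_union_right {a c d b : ℕ} {D₁ D₂ : Finset (ℕ × ℕ)} (hcd : c ≤ d)
    (h₁ : IsConnDiag a c D₁) (h₂ : IsConnDiag d b D₂) :
    (D₁ ∪ D₂).filter (fun p => d ≤ p.1) = D₂ := by
  ext p
  have := h₁.1 p
  have := h₂.1 p
  simp only [Finset.mem_filter, Finset.mem_union]
  grind

theorem IsConnDiag.disjoint {a c d b : ℕ} {D₁ D₂ : Finset (ℕ × ℕ)} (hcd : c ≤ d)
    (h₁ : IsConnDiag a c D₁) (h₂ : IsConnDiag d b D₂) : Disjoint D₁ D₂ := by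
  rw [Finset.disjoint_left]
  intro p hp hp'
  have := h₁.1 p hp
  have := h₂.1 p hp'
  omega

/-- Splitting a connected diagram at the farthest neighbour of its first point. -/
theorem sum_connDiags_eq {R : Type*} [CommSemiring R] (y : R) {a b : ℕ} (hab : a < b) :
    ∑ D ∈ connDiags a b, y ^ D.card = ∑ v ∈ Finset.Ioc a b,
      (∑ D ∈ chordDiags a v, y ^ D.card) * ∑ D ∈ connDiags v b, y ^ D.card := by
  simp_rw [Finset.sum_mul_sum, ← Finset.sum_product']
  rw [Finset.sum_sigma']
  symm
  refine Finset.sum_bij (fun x _ => x.2.1 ∪ x.2.2) ?_ ?_ ?_ ?_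
  · rintro ⟨v, D₁, D₂⟩ hx
    simp only [Finset.mem_sigma, Finset.mem_Ioc, Finset.mem_product, mem_chordDiags,
      mem_connDiags] at hx ⊢
    exact hx.2.1.1.union hx.1.1.le hx.1.2 hx.2.2
  · rintro ⟨v, D₁, D₂⟩ hx ⟨w, E₁, E₂⟩ hy heq
    simp only [Finset.mem_sigma, Finset.mem_Ioc, Finset.mem_product, mem_chordDiags,
      mem_connDiags] at hx hy heq
    have hvw : v = w := by
      have h1 : (a, v) ∈ E₁ ∪ E₂ := heq ▸ Finset.mem_union_left _ hx.2.1.2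
      have h2 : (a, w) ∈ D₁ ∪ D₂ := heq ▸ Finset.mem_union_left _ hy.2.1.2
      have h3 := hy.2.1.1.1 (a, v)
      have h4 := hy.2.2.1 (a, v)
      have h5 := hx.2.1.1.1 (a, w)
      have h6 := hx.2.2.1 (a, w)
      grind
    subst hvw
    have h1 := hx.2.1.1.filter_union_left le_rfl hx.2.2
    have h2 := hx.2.1.1.filter_union_right le_rfl hx.2.2
    rw [heq] at h1 h2
    rw [← h1, ← h2, hy.2.1.1.filter_union_left le_rfl hy.2.2,
      hy.2.1.1.filter_union_right le_rfl hy.2.2]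
  · intro D hD
    rw [mem_connDiags] at hD
    obtain ⟨v, hav, hvb, hmem, hv⟩ := hD.exists_farthest hab
    refine ⟨⟨v, D.filter fun p => p.2 ≤ v, D.filter fun p => v ≤ p.1⟩, ?_, ?_⟩
    · simp only [Finset.mem_sigma, Finset.mem_Ioc, Finset.mem_product, mem_chordDiags,
        mem_connDiags]
      exact ⟨⟨hav, hvb⟩, ⟨hD.filter_left hvb hv, Finset.mem_filter.2 ⟨hmem, le_rfl⟩⟩,
        hD.filter_right hav.le hv⟩
    · dsimp only
      rw [← Finset.filter_or, Finset.filter_true_of_mem hv]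
  · rintro ⟨v, D₁, D₂⟩ hx
    simp only [Finset.mem_sigma, Finset.mem_Ioc, Finset.mem_product, mem_chordDiags,
      mem_connDiags] at hx
    rw [Finset.card_union_of_disjoint (hx.2.1.1.disjoint le_rfl hx.2.2), pow_add]

theorem IsConnDiag.insert_chord {a b : ℕ} {D : Finset (ℕ × ℕ)} (hab : a < b)
    (h : IsConnDiag a b D) : IsConnDiag a b (insert (a, b) D) := by
  refine ⟨fun p hp => ?_, fun p hp q hq => ?_, fun S hS => h.2.2 S fun p hp =>
    hS p (Finset.mem_insert_of_mem hp)⟩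
  · rcases Finset.mem_insert.1 hp with rfl | hp
    · exact ⟨le_rfl, hab, le_rfl⟩
    · exact h.1 p hp
  · rcases Finset.mem_insert.1 hp with rfl | hp <;> rcases Finset.mem_insert.1 hq with rfl | hq
    · dsimp; omega
    · have := h.1 q hq; dsimp; omega
    · have := h.1 p hp; dsimp; omega
    · exact h.2.1 p hp q hq

/-- Joining diagrams on `[a, c]` and `[c + 1, b]` by the chord `(a, b)`. -/
theorem IsConnDiag.join {a b c : ℕ} {D₁ D₂ : Finset (ℕ × ℕ)} (hac : a ≤ c) (hcb : c < b)
    (h₁ : IsConnDiag a c D₁) (h₂ : IsConnDiag (c + 1) b D₂) :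
    IsConnDiag a b (insert (a, b) (D₁ ∪ D₂)) := by
  have range : ∀ p ∈ D₁ ∪ D₂, a ≤ p.1 ∧ p.1 < p.2 ∧ p.2 ≤ b := fun p hp => by
    rcases Finset.mem_union.1 hp with hp | hp
    · have := h₁.1 p hp; omega
    · have := h₂.1 p hp; omega
  refine ⟨fun p hp => ?_, fun p hp q hq => ?_,
    preconnected_of_base (c := a) fun S hS haS u hau hub => ?_⟩
  · rcases Finset.mem_insert.1 hp with rfl | hp
    · exact ⟨le_rfl, by dsimp; omega, le_rfl⟩
    · exact range p hp
  · rcases Finset.mem_insert.1 hp with rfl | hp <;> rcases Finset.mem_insert.1 hq with rfl | hq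
    · dsimp; omega
    · have := range q hq; dsimp; omega
    · have := range p hp; dsimp; omega
    · rcases Finset.mem_union.1 hp with hp | hp <;> rcases Finset.mem_union.1 hq with hq | hq
      · exact h₁.2.1 p hp q hq
      · have := h₁.1 p hp; have := h₂.1 q hq; omega
      · have := h₂.1 p hp; have := h₁.1 q hq; omega
      · exact h₂.2.1 p hp q hq
  · have hbS : b ∈ S := (hS (a, b) (Finset.mem_insert_self _ _)).1 haS
    rcases le_or_gt u c with huc | huc
    · exact h₁.2.2 S (fun p hp => hS p (by simp [hp])) a u le_rfl hac hau huc haS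
    · exact h₂.2.2 S (fun p hp => hS p (by simp [hp])) b u hcb le_rfl huc hub hbS

/-- If removing the chord `(a, b)` disconnects a connected diagram, the rest splits into a part
on `[a, c]` and a part on `[c + 1, b]`. -/
theorem IsConnDiag.exists_split {a b : ℕ} {D : Finset (ℕ × ℕ)} (h : IsConnDiag a b D)
    (hab : (a, b) ∈ D) (hD : ¬ IsConnDiag a b (D.erase (a, b))) :
    ∃ c, a ≤ c ∧ c < b ∧ ∀ p ∈ D.erase (a, b), p.2 ≤ c ∨ c + 1 ≤ p.1 := by
  have hlt : a < b := (h.1 _ hab).2.1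
  let K : Set ℕ := {u | ∀ S : Set ℕ, (∀ p ∈ D.erase (a, b), p.1 ∈ S ↔ p.2 ∈ S) → a ∈ S → u ∈ S}
  have haK : a ∈ K := fun S _ ha => ha
  have hK : ∀ p ∈ D.erase (a, b), p.1 ∈ K ↔ p.2 ∈ K := fun p hp =>
    ⟨fun hu S hS ha => (hS p hp).1 (hu S hS ha), fun hu S hS ha => (hS p hp).2 (hu S hS ha)⟩
  have hbK : b ∉ K := by
    intro hb
    refine hD ⟨fun p hp => h.1 p (Finset.mem_of_mem_erase hp),
      fun p hp q hq => h.2.1 p (Finset.mem_of_mem_erase hp) q (Finset.mem_of_mem_erase hq),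
      preconnected_of_base (c := a) fun S hS haS u hau hub => ?_⟩
    refine h.2.2 S (fun p hp => ?_) a u le_rfl hlt.le hau hub haS
    by_cases hpe : p = (a, b)
    · subst hpe
      exact iff_of_true haS (hb S hS haS)
    · exact hS p (Finset.mem_erase.2 ⟨hpe, hp⟩)
  classical
  obtain ⟨c, hcm, hmax⟩ := Finset.exists_max_image ((Finset.Icc a b).filter (· ∈ K)) id
    ⟨a, Finset.mem_filter.2 ⟨Finset.mem_Icc.2 ⟨le_rfl, hlt.le⟩, haK⟩⟩
  rw [Finset.mem_filter, Finset.mem_Icc] at hcm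
  obtain ⟨⟨hac, hcb⟩, hcK⟩ := hcm
  have hmax' : ∀ u, c < u → u ≤ b → u ∉ K := fun u hcu hub hu =>
    absurd (hmax u (Finset.mem_filter.2 ⟨Finset.mem_Icc.2 ⟨by omega, hub⟩, hu⟩)) (not_le.2 hcu)
  refine ⟨c, hac, lt_of_le_of_ne hcb (by rintro rfl; exact hbK hcK), fun p hp => ?_⟩
  by_contra! hcon
  have hpr := h.1 p (Finset.mem_of_mem_erase hp)
  have hp2 : p.2 ∉ K := hmax' _ hcon.1 hpr.2.2
  have hp1 : p.1 ∉ K := fun h1 => hp2 ((hK p hp).1 h1)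
  have := hcK (K \ Set.Ioo p.1 p.2) ?_ ⟨haK, fun h => absurd h.1 (by omega)⟩
  · have hc1 : p.1 ≠ c := by rintro rfl; exact hp1 hcK
    exact this.2 ⟨by omega, by omega⟩
  · intro q hq
    have hqr := h.1 q (Finset.mem_of_mem_erase hq)
    have hx := h.2.1 p (Finset.mem_of_mem_erase hp) q (Finset.mem_of_mem_erase hq)
    have hx' := h.2.1 q (Finset.mem_of_mem_erase hq) p (Finset.mem_of_mem_erase hp)
    simp only [Set.mem_sdiff, Set.mem_Ioo, hK q hq, and_congr_right_iff]
    intro hq2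
    have hq1 := (hK q hq).2 hq2
    have e1 : q.1 ≠ p.1 := fun e => hp1 (e ▸ hq1)
    have e2 : q.1 ≠ p.2 := fun e => hp2 (e ▸ hq1)
    have e3 : q.2 ≠ p.1 := fun e => hp1 (e ▸ hq2)
    have e4 : q.2 ≠ p.2 := fun e => hp2 (e ▸ hq2)
    omega

theorem IsConnDiag.split_left {a b c : ℕ} {D : Finset (ℕ × ℕ)} (h : IsConnDiag a b D)
    (hcb : c < b) (hc : ∀ p ∈ D.erase (a, b), p.2 ≤ c ∨ c + 1 ≤ p.1) :
    IsConnDiag a c ((D.erase (a, b)).filter fun p => p.2 ≤ c) := by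
  refine ⟨fun p hp => ?_, fun p hp q hq => h.2.1 p (by simp_all) q (by simp_all),
    preconnected_of_base (c := a) fun S hS haS u hau huc => ?_⟩
  · have h1 := h.1 p (by simp_all)
    have h2 := (Finset.mem_filter.1 hp).2
    omega
  · have key := h.2.2 (S ∪ {u | c < u}) ?_ a u le_rfl (by omega) hau (by omega) (.inl haS)
    · exact key.resolve_right (not_lt.2 huc)
    · intro p hp
      have hlt := h.1 p hp
      simp only [Set.mem_union, Set.mem_ofPred_eq]
      by_cases hpe : p = (a, b)
      · subst hpe; simp [haS, hcb]
      · rcases hc p (Finset.mem_erase.2 ⟨hpe, hp⟩) with hp2 | hp1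
        · rw [hS p (by simp [hpe, hp, hp2])]
          simp [not_lt.2 hp2, not_lt.2 (hlt.2.1.le.trans hp2)]
        · have : c < p.2 := by omega
          simp [this, Nat.lt_of_succ_le hp1]

theorem IsConnDiag.split_right {a b c : ℕ} {D : Finset (ℕ × ℕ)} (h : IsConnDiag a b D)
    (hac : a ≤ c) (hcb : c < b) (hc : ∀ p ∈ D.erase (a, b), p.2 ≤ c ∨ c + 1 ≤ p.1) :
    IsConnDiag (c + 1) b ((D.erase (a, b)).filter fun p => c + 1 ≤ p.1) := by
  refine ⟨fun p hp => ?_, fun p hp q hq => h.2.1 p (by simp_all) q (by simp_all),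
    preconnected_of_base (c := b) fun S hS hbS u hcu hub => ?_⟩
  · have h1 := h.1 p (by simp_all)
    have h2 := (Finset.mem_filter.1 hp).2
    omega
  · have key := h.2.2 (S ∪ {u | u ≤ c}) ?_ b u (by omega) le_rfl (by omega) hub (.inl hbS)
    · exact key.resolve_right (not_le.2 (Nat.lt_of_succ_le hcu))
    · intro p hp
      have hlt := h.1 p hp
      simp only [Set.mem_union, Set.mem_ofPred_eq]
      by_cases hpe : p = (a, b)
      · subst hpe; simp [hbS, hac]
      · rcases hc p (Finset.mem_erase.2 ⟨hpe, hp⟩) with hp2 | hp1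
        · have : p.1 ≤ c := by omega
          simp [this, hp2]
        · rw [← hS p (by simp [hpe, hp, Nat.lt_of_succ_le hp1])]
          have : c < p.2 := by omega
          simp [not_le.2 this, not_le.2 (Nat.lt_of_succ_le hp1)]

theorem sum_chordDiags_connected {R : Type*} [CommSemiring R] (y : R) {a b : ℕ} (hab : a < b) :
    ∑ D ∈ (chordDiags a b).filter (fun D => D.erase (a, b) ∈ connDiags a b), y ^ D.card =
      y * ∑ D ∈ (connDiags a b).filter (fun D => (a, b) ∉ D), y ^ D.card := by
  rw [Finset.mul_sum]
  refine Finset.sum_bij' (fun D _ => D.erase (a, b)) (fun D _ => insert (a, b) D) ?_ ?_ ?_ ?_ ?_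
  · intro D hD
    rw [Finset.mem_filter] at hD
    simp [hD.2]
  · intro D hD
    simp only [Finset.mem_filter, mem_chordDiags, mem_connDiags] at hD ⊢
    rw [Finset.erase_insert hD.2]
    exact ⟨⟨hD.1.insert_chord hab, Finset.mem_insert_self _ _⟩, hD.1⟩
  · intro D hD
    simp only [Finset.mem_filter, mem_chordDiags] at hD
    exact Finset.insert_erase hD.1.2
  · intro D hD
    exact Finset.erase_insert (Finset.mem_filter.1 hD).2
  · intro D hD
    simp only [Finset.mem_filter, mem_chordDiags] at hD
    rw [← pow_succ', Finset.card_erase_add_one hD.1.2]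

theorem sum_chordDiags_disconnected {R : Type*} [CommSemiring R] (y : R) (a b : ℕ) :
    ∑ D ∈ (chordDiags a b).filter (fun D => D.erase (a, b) ∉ connDiags a b), y ^ D.card =
      y * ∑ c ∈ Finset.Ico a b,
        (∑ D ∈ connDiags a c, y ^ D.card) * ∑ D ∈ connDiags (c + 1) b, y ^ D.card := by
  simp_rw [Finset.sum_mul_sum, ← Finset.sum_product']
  rw [Finset.sum_sigma', Finset.mul_sum]
  symm
  have notMem : ∀ {c : ℕ} {D₁ D₂ : Finset (ℕ × ℕ)}, a ≤ c → c < b → IsConnDiag a c D₁ →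
      IsConnDiag (c + 1) b D₂ → (a, b) ∉ D₁ ∪ D₂ := by
    intro c D₁ D₂ hac hcb h₁ h₂ hmem
    have := h₁.1 (a, b)
    have := h₂.1 (a, b)
    grind
  have gap : ∀ {c : ℕ} {D₁ D₂ : Finset (ℕ × ℕ)}, IsConnDiag a c D₁ →
      IsConnDiag (c + 1) b D₂ → ∀ p ∈ D₁ ∪ D₂, p.1 ≤ c ↔ p.2 ≤ c := by
    intro c D₁ D₂ h₁ h₂ p hp
    rcases Finset.mem_union.1 hp with hp | hp
    · have := h₁.1 p hp; omega
    · have := h₂.1 p hp; omega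
  refine Finset.sum_bij (fun x _ => insert (a, b) (x.2.1 ∪ x.2.2)) ?_ ?_ ?_ ?_
  · rintro ⟨c, D₁, D₂⟩ hx
    simp only [Finset.mem_sigma, Finset.mem_Ico, Finset.mem_product, mem_chordDiags,
      mem_connDiags, Finset.mem_filter] at hx ⊢
    obtain ⟨⟨hac, hcb⟩, h₁, h₂⟩ := hx
    rw [Finset.erase_insert (notMem hac hcb h₁ h₂)]
    refine ⟨⟨h₁.join hac hcb h₂, Finset.mem_insert_self _ _⟩, fun hcon => ?_⟩
    have : b ≤ c := hcon.2.2 {u | u ≤ c} (gap h₁ h₂) a b le_rfl (by omega) (by omega) le_rfl hac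
    omega
  · rintro ⟨c, D₁, D₂⟩ hx ⟨d, E₁, E₂⟩ hy heq
    simp only [Finset.mem_sigma, Finset.mem_Ico, Finset.mem_product, mem_connDiags] at hx hy heq
    obtain ⟨⟨hac, hcb⟩, h₁, h₂⟩ := hx
    obtain ⟨⟨had, hdb⟩, k₁, k₂⟩ := hy
    replace heq : D₁ ∪ D₂ = E₁ ∪ E₂ := by
      rw [← Finset.erase_insert (notMem hac hcb h₁ h₂), heq,
        Finset.erase_insert (notMem had hdb k₁ k₂)]
    have hcd : c = d := by
      have h3 : d ≤ c := by
        by_contra! hlt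
        have : d ≤ c := k₁.2.2 {u | u ≤ c}
          (fun p hp => gap h₁ h₂ p (heq ▸ Finset.mem_union_left _ hp)) a d le_rfl had had le_rfl hac
        omega
      have h4 : c ≤ d := by
        by_contra! hlt
        have : c ≤ d := h₁.2.2 {u | u ≤ d}
          (fun p hp => gap k₁ k₂ p (heq ▸ Finset.mem_union_left _ hp)) a c le_rfl hac hac le_rfl had
        omega
      exact le_antisymm h4 h3
    subst hcd
    have e₁ := h₁.filter_union_left c.le_succ h₂
    have e₂ := h₁.filter_union_right c.le_succ h₂
    rw [heq] at e₁ e₂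
    rw [← e₁, ← e₂, k₁.filter_union_left c.le_succ k₂, k₁.filter_union_right c.le_succ k₂]
  · intro D hD
    simp only [Finset.mem_filter, mem_chordDiags, mem_connDiags] at hD
    obtain ⟨c, hac, hcb, hc⟩ := hD.1.1.exists_split hD.1.2 hD.2
    refine ⟨⟨c, (D.erase (a, b)).filter fun p => p.2 ≤ c,
      (D.erase (a, b)).filter fun p => c + 1 ≤ p.1⟩, ?_, ?_⟩
    · simp only [Finset.mem_sigma, Finset.mem_Ico, Finset.mem_product, mem_connDiags]
      exact ⟨⟨hac, hcb⟩, hD.1.1.split_left hcb hc, hD.1.1.split_right hac hcb hc⟩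
    · dsimp only
      rw [← Finset.filter_or, Finset.filter_true_of_mem hc, Finset.insert_erase hD.1.2]
  · rintro ⟨c, D₁, D₂⟩ hx
    simp only [Finset.mem_sigma, Finset.mem_Ico, Finset.mem_product, mem_connDiags] at hx
    obtain ⟨⟨hac, hcb⟩, h₁, h₂⟩ := hx
    dsimp only
    rw [Finset.card_insert_of_notMem (notMem hac hcb h₁ h₂),
      Finset.card_union_of_disjoint (h₁.disjoint c.le_succ h₂), pow_succ', pow_add]

theorem sum_chordDiags_add {R : Type*} [CommSemiring R] (y : R) {a b : ℕ} (hab : a < b) :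
    (1 + y) * ∑ D ∈ chordDiags a b, y ^ D.card = y * (∑ D ∈ connDiags a b, y ^ D.card +
      ∑ c ∈ Finset.Ico a b,
        (∑ D ∈ connDiags a c, y ^ D.card) * ∑ D ∈ connDiags (c + 1) b, y ^ D.card) := by
  have h1 := Finset.sum_filter_add_sum_filter_not (chordDiags a b)
    (fun D => D.erase (a, b) ∈ connDiags a b) (fun D => y ^ D.card)
  have h2 := Finset.sum_filter_add_sum_filter_not (connDiags a b)
    (fun D => (a, b) ∈ D) (fun D => y ^ D.card)
  rw [sum_chordDiags_connected y hab, sum_chordDiags_disconnected] at h1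
  rw [← h2, add_mul, one_mul]
  nth_rewrite 1 [← h1]
  simp only [chordDiags]
  ring

/-- A connected crossing-free chord diagram on `n` points. -/
def IsConnFin {n : ℕ} (D : Finset (Fin n × Fin n)) : Prop :=
  IsDiagram D ∧ crossNum D = 0 ∧ (diagGraph D).Connected

theorem crossNum_eq_zero_iff {n : ℕ} {D : Finset (Fin n × Fin n)} :
    crossNum D = 0 ↔ ∀ p ∈ D, ∀ q ∈ D, ¬ (p.1 < q.1 ∧ q.1 < p.2 ∧ p.2 < q.2) := by
  rw [crossNum, Finset.card_eq_zero, Finset.filter_eq_empty_iff]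
  exact ⟨fun h p hp q hq => h (Finset.mk_mem_product hp hq), fun h x hx =>
    h x.1 (Finset.mem_product.1 hx).1 x.2 (Finset.mem_product.1 hx).2⟩

theorem diagGraph_preconnected_iff {n : ℕ} {D : Finset (Fin n × Fin n)} (hD : IsDiagram D) :
    (diagGraph D).Preconnected ↔
      ∀ S : Set (Fin n), (∀ p ∈ D, p.1 ∈ S ↔ p.2 ∈ S) → ∀ u v, u ∈ S → v ∈ S := by
  constructor
  · intro h S hS u v hu
    obtain ⟨w⟩ := h u v
    induction w with
    | nil => exact hu
    | cons hadj _ ih =>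
      refine ih ?_
      rcases (SimpleGraph.fromRel_adj _ _ _).1 hadj with ⟨-, h | h⟩
      · exact (hS _ h).1 hu
      · exact (hS _ h).2 hu
  · intro h u v
    refine h {w | (diagGraph D).Reachable u w} (fun p hp => ?_) u v (SimpleGraph.Reachable.refl u)
    have hadj : (diagGraph D).Adj p.1 p.2 :=
      (SimpleGraph.fromRel_adj _ _ _).2 ⟨(hD p hp).ne, Or.inl hp⟩
    exact ⟨fun h => h.trans hadj.reachable, fun h => h.trans hadj.symm.reachable⟩

/-- Chords on `Fin n` seen as chords on `a, a + 1, …, a + n - 1`. -/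
def shiftChord (a n : ℕ) : Fin n × Fin n ↪ ℕ × ℕ where
  toFun p := (a + p.1, a + p.2)
  inj' p q h := by
    simp only [Prod.mk.injEq, Nat.add_left_cancel_iff] at h
    exact Prod.ext (Fin.ext h.1) (Fin.ext h.2)

@[simp]
theorem shiftChord_apply (a n : ℕ) (p : Fin n × Fin n) :
    shiftChord a n p = (a + p.1.val, a + p.2.val) := rfl

theorem isConnDiag_map_shiftChord {a l : ℕ} {D : Finset (Fin (l + 1) × Fin (l + 1))} :
    IsConnDiag a (a + l) (D.map (shiftChord a (l + 1))) ↔ IsConnFin D := by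
  have range : (∀ p ∈ D.map (shiftChord a (l + 1)), a ≤ p.1 ∧ p.1 < p.2 ∧ p.2 ≤ a + l) ↔
      IsDiagram D := by
    simp only [Finset.forall_mem_map, IsDiagram, shiftChord_apply]
    refine forall₂_congr fun p _ => ?_
    have := p.1.isLt
    have := p.2.isLt
    rw [Fin.lt_def]
    omega
  have cross : (∀ p ∈ D.map (shiftChord a (l + 1)), ∀ q ∈ D.map (shiftChord a (l + 1)),
      ¬ (p.1 < q.1 ∧ q.1 < p.2 ∧ p.2 < q.2)) ↔ crossNum D = 0 := by
    simp only [crossNum_eq_zero_iff, Finset.forall_mem_map, shiftChord_apply,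
      Nat.add_lt_add_iff_left, Fin.val_fin_lt]
  rw [IsConnDiag, IsConnFin, range, cross]
  refine and_congr_right fun hD => and_congr_right fun _ => ?_
  rw [SimpleGraph.connected_iff, and_iff_left ⟨0⟩, diagGraph_preconnected_iff hD]
  constructor
  · intro h S hS u v hu
    have key := h {w | ∃ s ∈ S, w = a + s.val} ?_ (a + u) (a + v) (by omega) (by omega) (by omega)
      (by omega) ⟨u, hu, rfl⟩
    · obtain ⟨s, hs, hvs⟩ := key
      rwa [Fin.ext (Nat.add_left_cancel hvs)]
    · simp only [Finset.forall_mem_map]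
      intro p hp
      simpa [Fin.val_inj] using hS p hp
  · intro h S hS u v hau hul hav hvl hu
    have key := h {w | a + w.val ∈ S} (fun p hp => hS _ (Finset.mem_map_of_mem _ hp))
      ⟨u - a, by omega⟩ ⟨v - a, by omega⟩ (by simpa [Nat.add_sub_cancel' hau] using hu)
    simpa [Nat.add_sub_cancel' hav] using key

open Classical in
theorem connDiags_eq_map (a l : ℕ) :
    connDiags a (a + l) = (Finset.univ.filter (IsConnFin (n := l + 1))).map
      (Finset.mapEmbedding (shiftChord a (l + 1))).toEmbedding := by
  ext D
  simp only [mem_connDiags, Finset.mem_map, Finset.mem_filter, Finset.mem_univ, true_and]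
  constructor
  · intro h
    have hD : (D.preimage (shiftChord a (l + 1)) (shiftChord a (l + 1)).injective.injOn).map
        (shiftChord a (l + 1)) = D := by
      ext p
      simp only [Finset.mem_map, Finset.mem_preimage]
      refine ⟨by rintro ⟨q, hq, rfl⟩; exact hq, fun hp => ?_⟩
      have hr := h.1 p hp
      have he : shiftChord a (l + 1) (⟨p.1 - a, by omega⟩, ⟨p.2 - a, by omega⟩) = p := by
        ext <;> simp <;> omega
      exact ⟨_, he.symm ▸ hp, he⟩
    exact ⟨_, isConnDiag_map_shiftChord.1 (hD.symm ▸ h), hD⟩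
  · rintro ⟨E, hE, rfl⟩
    exact isConnDiag_map_shiftChord.2 hE

open Classical in
/-- Connected crossing-free diagrams on `n` points, weighted by their number of chords. -/
noncomputable def connWeight {R : Type*} [CommSemiring R] (y : R) (n : ℕ) : R :=
  ∑ D ∈ Finset.univ.filter (IsConnFin (n := n)), y ^ D.card

/-- Connected crossing-free diagrams on `n` points containing the chord joining the first and
the last point, weighted by their number of chords. -/
noncomputable def chordWeight {R : Type*} [CommSemiring R] (y : R) (n : ℕ) : R :=
  ∑ D ∈ chordDiags 0 (n - 1), y ^ D.card

section Weights

variable {R : Type*}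

theorem sum_connDiags [CommSemiring R] (y : R) (a l : ℕ) :
    ∑ D ∈ connDiags a (a + l), y ^ D.card = connWeight y (l + 1) := by
  simp [connDiags_eq_map, connWeight]

theorem sum_chordDiags [CommSemiring R] (y : R) (a l : ℕ) :
    ∑ D ∈ chordDiags a (a + l), y ^ D.card = chordWeight y (l + 1) := by
  have hmem : ∀ (b : ℕ) (D : Finset (Fin (l + 1) × Fin (l + 1))),
      (b, b + l) ∈ D.map (shiftChord b (l + 1)) ↔ ((0, Fin.last l) : Fin (l + 1) × _) ∈ D := by
    intro b D
    rw [← Finset.mem_map' (shiftChord b (l + 1))]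
    simp only [shiftChord_apply, Fin.val_zero, Fin.val_last, add_zero]
  classical
  have key : ∀ b : ℕ, ∑ D ∈ chordDiags b (b + l), y ^ D.card = ∑ D ∈ Finset.univ.filter
      (fun D : Finset (Fin (l + 1) × Fin (l + 1)) => IsConnFin D ∧ (0, Fin.last l) ∈ D),
        y ^ D.card := by
    intro b
    rw [chordDiags, connDiags_eq_map, Finset.filter_map, Finset.filter_filter]
    simp [hmem]
  rw [key a, ← key 0, chordWeight, zero_add, Nat.add_sub_cancel]

theorem connWeight_zero [CommSemiring R] (y : R) : connWeight y 0 = 0 := by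
  classical
  refine Finset.sum_eq_zero fun D hD => ?_
  exact (IsEmpty.false (Finset.mem_filter.1 hD).2.2.2.nonempty.some).elim

theorem connWeight_one [CommSemiring R] (y : R) : connWeight y 1 = 1 := by
  have : connDiags 0 0 = {∅} := by
    ext D
    rw [mem_connDiags, Finset.mem_singleton]
    constructor
    · intro h
      refine Finset.eq_empty_of_forall_notMem fun p hp => ?_
      have := h.1 p hp
      omega
    · rintro rfl
      refine ⟨by simp, by simp, fun S _ u v _ hu _ hv h => ?_⟩
      rwa [Nat.le_zero.1 hv, ← Nat.le_zero.1 hu]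
  rw [← sum_connDiags y 0 0, this]
  simp

theorem chordWeight_of_le_one [CommSemiring R] (y : R) {n : ℕ} (hn : n ≤ 1) :
    chordWeight y n = 0 := by
  refine Finset.sum_eq_zero fun D hD => ?_
  rw [mem_chordDiags] at hD
  have := hD.1.1 _ hD.2
  dsimp at this
  omega

theorem connWeight_add_two [CommSemiring R] (y : R) (m : ℕ) :
    connWeight y (m + 2) =
      ∑ k ∈ Finset.range (m + 1), chordWeight y (k + 2) * connWeight y (m + 1 - k) := by
  rw [← sum_connDiags y 0, sum_connDiags_eq y (by omega)]
  refine Finset.sum_nbij' (· - 1) (· + 1) ?_ ?_ ?_ ?_ ?_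
  · intro v hv; simp only [Finset.mem_Ioc, Finset.mem_range] at *; omega
  · intro v hv; simp only [Finset.mem_Ioc, Finset.mem_range] at *; omega
  · intro v hv; simp only [Finset.mem_Ioc] at *; omega
  · intro v hv; simp
  · intro v hv
    rw [Finset.mem_Ioc] at hv
    have h1 := sum_chordDiags y 0 v
    have h2 := sum_connDiags y v (m + 1 - v)
    rw [zero_add] at h1
    rw [show v + (m + 1 - v) = 0 + (m + 1) by omega] at h2
    rw [h1, h2]
    congr 2 <;> omega

theorem chordWeight_add_two [CommSemiring R] (y : R) (m : ℕ) :
    (1 + y) * chordWeight y (m + 2) = y * (connWeight y (m + 2) +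
      ∑ k ∈ Finset.range (m + 1), connWeight y (k + 1) * connWeight y (m + 1 - k)) := by
  rw [← sum_connDiags y 0, ← sum_chordDiags y 0, sum_chordDiags_add y (by omega)]
  congr 2
  rw [← Finset.range_eq_Ico, zero_add]
  refine Finset.sum_congr rfl fun c hc => ?_
  rw [Finset.mem_range] at hc
  have h1 := sum_connDiags y 0 c
  have h2 := sum_connDiags y (c + 1) (m - c)
  rw [zero_add] at h1
  rw [show c + 1 + (m - c) = m + 1 by omega] at h2
  rw [h1, h2]
  congr 2
  omega

theorem mk_connWeight_sub_X [CommRing R] (y : R) :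
    (PowerSeries.X : PowerSeries R) * (PowerSeries.mk (connWeight y) - PowerSeries.X) =
      PowerSeries.mk (chordWeight y) * PowerSeries.mk (connWeight y) := by
  have e0 := chordWeight_of_le_one y zero_le_one
  have e1 := chordWeight_of_le_one y le_rfl
  ext n
  rw [PowerSeries.coeff_mul _ (PowerSeries.mk _), Finset.Nat.sum_antidiagonal_eq_sum_range_succ_mk]
  rcases n with _ | _ | _ | m
  · simp [e0]
  · simp [Finset.sum_range_succ, e0, e1, connWeight_zero, PowerSeries.coeff_succ_X_mul]
  · simp [Finset.sum_range_succ, e0, e1, connWeight_zero, PowerSeries.coeff_succ_X_mul,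
      PowerSeries.coeff_X, connWeight_one]
  · rw [Finset.sum_range_succ, Finset.sum_range_succ', Finset.sum_range_succ']
    simp [e0, e1, connWeight_zero, PowerSeries.coeff_succ_X_mul, PowerSeries.coeff_X,
      connWeight_add_two]

theorem mk_chordWeight_eq [CommRing R] (y : R) :
    (1 + PowerSeries.C y) * PowerSeries.mk (chordWeight y) =
      PowerSeries.C y *
        (PowerSeries.mk (connWeight y) - PowerSeries.X + PowerSeries.mk (connWeight y) ^ 2) := by
  have e0 := chordWeight_of_le_one y zero_le_one
  have e1 := chordWeight_of_le_one y le_rfl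
  ext n
  rw [← map_one (PowerSeries.C (R := R)), ← map_add, PowerSeries.coeff_C_mul,
    PowerSeries.coeff_C_mul, map_add, pow_two, PowerSeries.coeff_mul,
    Finset.Nat.sum_antidiagonal_eq_sum_range_succ_mk]
  rcases n with _ | _ | m
  · simp [e0, connWeight_zero]
  · simp [Finset.sum_range_succ, e1, connWeight_zero, connWeight_one, PowerSeries.coeff_X]
  · rw [Finset.sum_range_succ, Finset.sum_range_succ']
    simp [connWeight_zero, PowerSeries.coeff_X, chordWeight_add_two]

theorem mk_connWeight_algebraic_equation [CommRing R] (y : R) :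
    PowerSeries.C y * PowerSeries.mk (connWeight y) ^ 3 +
      PowerSeries.C y * PowerSeries.mk (connWeight y) ^ 2 -
      PowerSeries.X * (1 + 2 * PowerSeries.C y) * PowerSeries.mk (connWeight y) +
      PowerSeries.X ^ 2 * (1 + PowerSeries.C y) = 0 := by
  linear_combination -(1 + PowerSeries.C y) * mk_connWeight_sub_X y -
    PowerSeries.mk (connWeight y) * mk_chordWeight_eq y

end Weights

theorem finSuccEquiv_connDiagGF0 :
    MvPowerSeries.finSuccEquiv ℚ 1 connDiagGF0 =
      PowerSeries.mk (connWeight (MvPowerSeries.X 0 : MvPowerSeries (Fin 1) ℚ)) := by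
  classical
  have count : ∀ n m : ℕ, (Nat.card {D : Finset (Fin n × Fin n) //
      IsDiagram D ∧ crossNum D = 0 ∧ D.card = m ∧ (diagGraph D).Connected} : ℚ) =
      ∑ D ∈ Finset.univ.filter (IsConnFin (n := n)), if m = D.card then 1 else 0 := by
    intro n m
    rw [Finset.sum_boole, Finset.filter_filter, Nat.card_eq_fintype_card, Fintype.card_subtype]
    congr 2
    ext D
    simp only [Finset.mem_filter_univ, IsConnFin, eq_comm (a := m)]
    tauto
  ext k x
  rw [MvPowerSeries.coeff_coeff_finSuccEquiv, PowerSeries.coeff_mk, connWeight, map_sum]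
  refine (count _ _).trans ?_
  have h1 : (Finsupp.cons k x : Fin 2 →₀ ℕ) 1 = x 0 := Finsupp.cons_succ 0 k x
  rw [Finsupp.cons_zero, h1]
  refine Finset.sum_congr rfl fun D _ => ?_
  rw [MvPowerSeries.coeff_X_pow]
  refine if_congr ⟨fun h => ?_, fun h => ?_⟩ rfl rfl
  · refine Finsupp.ext fun i => ?_
    rw [Subsingleton.elim i 0, h, Finsupp.single_eq_same]
  · rw [h, Finsupp.single_eq_same]

/-- The generating function `C(x,y)` of connected crossing-free chord diagrams
satisfies `y·C³ + y·C² − x(1+2y)·C + x²(1+y) = 0`. -/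
theorem connDiagGF0_algebraic_equation :
    (MvPowerSeries.X 1 : MvPowerSeries (Fin 2) ℚ) * connDiagGF0 ^ 3 +
      MvPowerSeries.X 1 * connDiagGF0 ^ 2 -
      MvPowerSeries.X 0 * (1 + 2 * MvPowerSeries.X 1) * connDiagGF0 +
      MvPowerSeries.X 0 ^ 2 * (1 + MvPowerSeries.X 1) = 0 := by
  have h1 : MvPowerSeries.finSuccEquiv ℚ 1 (MvPowerSeries.X 1) =
      PowerSeries.C (MvPowerSeries.X 0) := MvPowerSeries.finSuccEquiv_X_succ 0
  apply (MvPowerSeries.finSuccEquiv ℚ 1).injective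
  simp only [map_add, map_sub, map_mul, map_pow, map_one, map_ofNat, map_zero, h1,
    MvPowerSeries.finSuccEquiv_X_zero, finSuccEquiv_connDiagGF0]
  exact mk_connWeight_algebraic_equation (MvPowerSeries.X 0)
end

section
/- The generating function G(x) = x⁴/(1−x) of 1-core trees satisfies: the number of unrooted trees on n ≥ 4 points of a circle with exactly one crossing in which every leaf-edge participates in the crossing structure as a 1-core equals 1 for every n ≥ 4; equivalently, for each n ≥ 4 there is, up to rotation, exactly one 1-core tree on n vertices. -/
/-- Two chords cross when their endpoints interleave, in either order. -/
def CrossRel {n : ℕ} (p q : Fin n × Fin n) : Prop :=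
  Interleaves p q ∨ Interleaves q p

/-- The degree of the vertex `v` in the chord diagram `D`. -/
def degreeAt {n : ℕ} (D : Finset (Fin n × Fin n)) (v : Fin n) : ℕ :=
  (D.filter fun p => p.1 = v ∨ p.2 = v).card

/-- A `1`-core tree: a tree on points of a circle with exactly one crossing in
which every chord incident to a leaf is involved in a crossing. -/
def IsOneCoreTree {n : ℕ} (D : Finset (Fin n × Fin n)) : Prop :=
  IsDiagram D ∧ (diagGraph D).IsTree ∧ crossNum D = 1 ∧
    ∀ p ∈ D, (degreeAt D p.1 = 1 ∨ degreeAt D p.2 = 1) → ∃ q ∈ D, CrossRel p q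

/-- The rotation by `c` of a (normalized) chord: rotate both endpoints and
normalize. -/
def rotPair {n : ℕ} (c : Fin n) (p : Fin n × Fin n) : Fin n × Fin n :=
  if p.1 + c ≤ p.2 + c then (p.1 + c, p.2 + c) else (p.2 + c, p.1 + c)

theorem diagGraph_adj_iff {n : ℕ} {D : Finset (Fin n × Fin n)} {u v : Fin n} :
    (diagGraph D).Adj u v ↔ u ≠ v ∧ ((u, v) ∈ D ∨ (v, u) ∈ D) :=
  SimpleGraph.fromRel_adj _ _ _

/-- In a finite tree, a set of vertices without leaves whose outer neighbours all lie on a single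
edge is empty. -/
theorem SimpleGraph.IsTree.notMem_of_forall_exists_ne_adj {V : Type*} [Fintype V]
    {G : SimpleGraph V} (hG : G.IsTree) {x y : V} (hxy : G.Adj x y) {S : Set V}
    (hx : x ∉ S) (hS : ∀ v ∈ S, ∀ w, G.Adj v w → w ∈ S ∨ w = x ∨ w = y)
    (hleaf : ∀ v ∈ S, ∀ w, G.Adj v w → ∃ w' ≠ w, G.Adj v w') (v : V) : v ∉ S := by
  intro hv
  have key : ∀ k : ℕ, ∃ u ∈ S, ∃ p : G.Walk x u, p.IsPath ∧ k ≤ p.length := by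
    intro k
    induction k with
    | zero =>
      obtain ⟨p, hp⟩ := hG.connected.exists_isPath x v
      exact ⟨v, hv, p, hp, Nat.zero_le _⟩
    | succ k ih =>
      obtain ⟨u, hu, p, hp, hk⟩ := ih
      have hnil : ¬ p.Nil := fun h => hx (h.eq ▸ hu)
      obtain ⟨w, hw, hadj⟩ := hleaf u hu p.penultimate (p.adj_penultimate hnil).symm
      have hws : w ∉ p.support := fun h =>
        hw (hG.isAcyclic.eq_penultimate_of_adj_end hp hadj h)
      rcases hS u hu w hadj with h | rfl | rfl
      · exact ⟨w, h, p.concat hadj, hp.concat hws hadj, by simpa using hk⟩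
      · exact absurd p.start_mem_support hws
      · have := hG.isAcyclic.eq_penultimate_of_adj_end (hp.concat hws hadj) hxy.symm
          (SimpleGraph.Walk.start_mem_support _)
        rw [SimpleGraph.Walk.penultimate_concat] at this
        exact absurd (this ▸ hu) hx
  obtain ⟨u, -, p, hp, hk⟩ := key (Fintype.card V)
  exact absurd hp.length_lt (by omega)

/-- `(a, c)` and `(b, d)` are the crossing chords of `D`, and no other chords cross. -/
structure IsUniqueCrossing {n : ℕ} (D : Finset (Fin n × Fin n)) (a b c d : Fin n) : Prop where
  left_mem : (a, c) ∈ D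
  right_mem : (b, d) ∈ D
  lt₁ : a < b
  lt₂ : b < c
  lt₃ : c < d
  eq_of_interleaves : ∀ p ∈ D, ∀ q ∈ D, Interleaves p q → p = (a, c) ∧ q = (b, d)

theorem exists_isUniqueCrossing {n : ℕ} {D : Finset (Fin n × Fin n)} (h : crossNum D = 1) :
    ∃ a b c d, IsUniqueCrossing D a b c d := by
  obtain ⟨⟨⟨a, c⟩, ⟨b, d⟩⟩, he⟩ := Finset.card_eq_one.1 h
  have hmem : ∀ p q, (p ∈ D ∧ q ∈ D) ∧ Interleaves p q ↔ p = (a, c) ∧ q = (b, d) := by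
    intro p q
    have := Finset.ext_iff.1 he (p, q)
    simpa only [Finset.mem_filter, Finset.mem_product, Finset.mem_singleton, Prod.mk.injEq]
      using this
  obtain ⟨⟨h₁, h₂⟩, h₃, h₄, h₅⟩ := (hmem (a, c) (b, d)).2 ⟨rfl, rfl⟩
  exact ⟨a, b, c, d, h₁, h₂, h₃, h₄, h₅, fun p hp q hq hpq => (hmem p q).1 ⟨⟨hp, hq⟩, hpq⟩⟩

namespace IsOneCoreTree

variable {n : ℕ} {D : Finset (Fin n × Fin n)} {a b c d : Fin n}

theorem exists_ne_adj (h : IsOneCoreTree D) (hc : IsUniqueCrossing D a b c d) {v w : Fin n}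
    (hv : v ≠ a ∧ v ≠ b ∧ v ≠ c ∧ v ≠ d) (hw : (diagGraph D).Adj v w) :
    ∃ w' ≠ w, (diagGraph D).Adj v w' := by
  obtain ⟨hD, -, -, hleaf⟩ := h
  obtain ⟨p, hp, hpv, hpw⟩ : ∃ p ∈ D, (p.1 = v ∨ p.2 = v) ∧ (p = (v, w) ∨ p = (w, v)) := by
    rcases (diagGraph_adj_iff.1 hw).2 with h | h
    · exact ⟨_, h, Or.inl rfl, Or.inl rfl⟩
    · exact ⟨_, h, Or.inr rfl, Or.inr rfl⟩
  have hdeg : degreeAt D v ≠ 1 := by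
    intro h1
    obtain ⟨q, hq, hpq | hpq⟩ := hleaf p hp (by rcases hpv with h | h <;> simp [h, h1])
    · have := hc.eq_of_interleaves p hp q hq hpq
      grind
    · have := hc.eq_of_interleaves q hq p hp hpq
      grind
  have hpos : p ∈ D.filter fun p => p.1 = v ∨ p.2 = v := Finset.mem_filter.2 ⟨hp, hpv⟩
  obtain ⟨q, hq, hqp⟩ := Finset.exists_mem_ne (s := D.filter fun p => p.1 = v ∨ p.2 = v)
    (by have := Finset.card_pos.2 ⟨p, hpos⟩; unfold degreeAt at hdeg; omega) p
  obtain ⟨hqD, hqv⟩ := Finset.mem_filter.1 hq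
  have h1 := hD p hp
  have h2 := hD q hqD
  obtain ⟨x, y⟩ := q
  rcases hqv with rfl | rfl
  · exact ⟨y, by rintro rfl; grind, diagGraph_adj_iff.2 ⟨h2.ne, Or.inl hqD⟩⟩
  · exact ⟨x, by rintro rfl; grind, diagGraph_adj_iff.2 ⟨h2.ne', Or.inr hqD⟩⟩

/-- A chord not involved in the crossing is a side of the polygon. -/
theorem side_of_ne (h : IsOneCoreTree D) (hc : IsUniqueCrossing D a b c d) {x y : Fin n}
    (hp : (x, y) ∈ D) (h₁ : (x, y) ≠ (a, c)) (h₂ : (x, y) ≠ (b, d)) :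
    (y : ℕ) = x + 1 ∨ ((x : ℕ) = 0 ∧ (y : ℕ) + 1 = n) := by
  have hxy : x < y := h.1 _ hp
  have hadj : (diagGraph D).Adj x y := diagGraph_adj_iff.2 ⟨hxy.ne, Or.inl hp⟩
  have hnc : ∀ q ∈ D, ¬ Interleaves (x, y) q ∧ ¬ Interleaves q (x, y) := fun q hq =>
    ⟨fun hi => h₁ (hc.eq_of_interleaves _ hp _ hq hi).1,
      fun hi => h₂ (hc.eq_of_interleaves _ hq _ hp hi).2⟩
  have hnc' : ∀ u v, (diagGraph D).Adj u v →
      ¬ (x < u ∧ u < y ∧ (v < x ∨ y < v)) := by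
    intro u v huv
    rcases (diagGraph_adj_iff.1 huv).2 with hq | hq <;>
    · have := hnc _ hq
      have hlt := h.1 _ hq
      simp only [Interleaves] at this
      grind
  have hac := hnc _ hc.left_mem
  have hbd := hnc _ hc.right_mem
  simp only [Interleaves] at hac hbd
  have l₁ := hc.lt₁
  have l₂ := hc.lt₂
  have l₃ := hc.lt₃
  by_cases hin : ∀ v, x < v → v < y → (v ≠ a ∧ v ≠ b ∧ v ≠ c ∧ v ≠ d)
  · left
    by_contra hne
    have := h.2.1.notMem_of_forall_exists_ne_adj hadj (S := {v | x < v ∧ v < y})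
      (by simp) (fun v hv w hw => by
        have := hnc' v w hw
        simp only [Set.mem_ofPred_eq] at *
        grind)
      (fun v hv w hw => h.exists_ne_adj hc (hin v hv.1 hv.2) hw) ⟨x + 1, by omega⟩
    simp only [Set.mem_ofPred_eq, Fin.lt_def] at this
    omega
  · right
    have hout : ∀ v, v < x ∨ y < v → (v ≠ a ∧ v ≠ b ∧ v ≠ c ∧ v ≠ d) := by
      clear hnc hnc'
      push Not at hin
      obtain ⟨u, hu₁, hu₂, hu⟩ := hin
      simp only [Fin.lt_def, Fin.ext_iff, ne_eq] at *
      intro v hv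
      omega
    have := h.2.1.notMem_of_forall_exists_ne_adj hadj (S := {v | v < x ∨ y < v})
      (by simp [hxy.le]) (fun v hv w hw => by
        have := hnc' w v hw.symm
        simp only [Set.mem_ofPred_eq] at *
        grind)
      (fun v hv w hw => h.exists_ne_adj hc (hout v hv) hw)
    have h0 := this ⟨0, by omega⟩
    have h1 := this ⟨n - 1, by omega⟩
    simp only [Set.mem_ofPred_eq, Fin.lt_def] at h0 h1
    omega

end IsOneCoreTree

theorem Fin.val_add_one_cases {m : ℕ} (i : Fin (m + 4)) :
    ((i : ℕ) + 1 = m + 4 ∧ ((i + 1 : Fin (m + 4)) : ℕ) = 0) ∨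
      ((i : ℕ) + 1 < m + 4 ∧ ((i + 1 : Fin (m + 4)) : ℕ) = i + 1) := by
  have h := Fin.val_add_one i
  have h1 := Fin.ext_iff (a := i) (b := Fin.last (m + 3))
  rw [Fin.val_last] at h1
  split_ifs at h with h2 <;> grind

theorem Fin.eq_of_sym2_add_one_eq {m : ℕ} {i j : Fin (m + 4)}
    (h : s(i, i + 1) = s(j, j + 1)) : i = j := by
  have hi := Fin.val_add_one_cases i
  have hj := Fin.val_add_one_cases j
  simp only [Sym2.eq_iff, Fin.ext_iff] at h ⊢
  omega

/-- The chords of the path-like `1`-core tree whose crossing points are `t`, `t + 1`, `t + 2` and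
`t + 3`: the two crossing chords, and all sides of the polygon but three. -/
def IsPathLikeChord {m : ℕ} (t : Fin (m + 4)) (z : Sym2 (Fin (m + 4))) : Prop :=
  z = s(t, t + 1 + 1) ∨ z = s(t + 1, t + 1 + 1 + 1) ∨
    ∃ i, i ≠ t ∧ i ≠ t + 1 ∧ i ≠ t + 1 + 1 ∧ z = s(i, i + 1)

theorem isPathLikeChord_map_add {m : ℕ} (t c : Fin (m + 4)) (u v : Fin (m + 4)) :
    IsPathLikeChord (t + c) s(u + c, v + c) ↔ IsPathLikeChord t s(u, v) := by
  have h₁ : ∀ x y : Fin (m + 4), s(u + c, v + c) = s(x + c, y + c) ↔ s(u, v) = s(x, y) := by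
    simp
  unfold IsPathLikeChord
  rw [add_right_comm t c 1, add_right_comm (t + 1) c 1,
    add_right_comm (t + 1 + 1) c 1, h₁, h₁,
    ← (Equiv.addRight c).exists_congr_right]
  simp only [Equiv.coe_addRight, add_right_comm _ c 1, h₁, ne_eq, add_left_inj]

/-- The crossing points of a `1`-core tree are consecutive, and the tree consists of the crossing
chords and the sides of the polygon which do not join consecutive crossing points. -/
theorem IsOneCoreTree.exists_adj_iff {m : ℕ} {D : Finset (Fin (m + 4) × Fin (m + 4))}
    (h : IsOneCoreTree D) {a b c d : Fin (m + 4)} (hc : IsUniqueCrossing D a b c d) :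
    ∃ e, (e = a ∨ e = b ∨ e = c ∨ e = d) ∧
      (a ≠ e → a + 1 = b) ∧ (b ≠ e → b + 1 = c) ∧ (c ≠ e → c + 1 = d) ∧ (d ≠ e → d + 1 = a) ∧
      ∀ u v, (diagGraph D).Adj u v ↔ s(u, v) = s(a, c) ∨ s(u, v) = s(b, d) ∨
        ∃ i, ¬ ((i = a ∨ i = b ∨ i = c ∨ i = d) ∧ i ≠ e) ∧ s(u, v) = s(i, i + 1) := by
  classical
  have l₁ := hc.lt₁
  have l₂ := hc.lt₂
  have l₃ := hc.lt₃
  have hside : ∀ u v, (diagGraph D).Adj u v →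
      s(u, v) = s(a, c) ∨ s(u, v) = s(b, d) ∨ v = u + 1 ∨ u = v + 1 := by
    intro u v huv
    have hu := Fin.val_add_one_cases u
    have hv := Fin.val_add_one_cases v
    by_contra! hne
    obtain ⟨h1, h2, h3, h4⟩ := hne
    simp only [Sym2.eq_iff, Fin.ext_iff, ne_eq] at h1 h2 h3 h4
    rcases (diagGraph_adj_iff.1 huv).2 with hq | hq
    · have := h.side_of_ne hc hq (by simp [Fin.ext_iff]; omega) (by simp [Fin.ext_iff]; omega)
      omega
    · have := h.side_of_ne hc hq (by simp [Fin.ext_iff]; omega) (by simp [Fin.ext_iff]; omega)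
      omega
  have hac : (diagGraph D).Adj a c := diagGraph_adj_iff.2 ⟨(l₁.trans l₂).ne, Or.inl hc.left_mem⟩
  have hbd : (diagGraph D).Adj b d := diagGraph_adj_iff.2 ⟨(l₂.trans l₃).ne, Or.inl hc.right_mem⟩
  set E : Finset (Fin (m + 4)) := Finset.univ.filter fun i => (diagGraph D).Adj i (i + 1) with hE
  have hmemE : ∀ i, i ∈ E ↔ (diagGraph D).Adj i (i + 1) := by simp [hE]
  have hedge : (diagGraph D).edgeFinset = E.image (fun i => s(i, i + 1)) ∪ {s(a, c), s(b, d)} := by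
    ext z
    induction z with | _ u v
    simp only [SimpleGraph.mem_edgeFinset, SimpleGraph.mem_edgeSet, Finset.mem_union,
      Finset.mem_image, Finset.mem_insert, Finset.mem_singleton, hmemE]
    constructor
    · intro huv
      rcases hside u v huv with h1 | h1 | rfl | rfl
      · exact Or.inr (Or.inl h1)
      · exact Or.inr (Or.inr h1)
      · exact Or.inl ⟨u, huv, rfl⟩
      · exact Or.inl ⟨v, huv.symm, Sym2.eq_swap⟩
    · rintro (⟨i, hi, hz⟩ | hz | hz)
      · rwa [← SimpleGraph.mem_edgeSet, ← hz]
      · rwa [← SimpleGraph.mem_edgeSet, hz]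
      · rwa [← SimpleGraph.mem_edgeSet, hz]
  have hcard : E.card + 3 = m + 4 := by
    have h1 := h.2.1.card_edgeFinset
    rw [hedge, Finset.card_union_of_disjoint, Finset.card_pair,
      Finset.card_image_of_injective _ fun i j => Fin.eq_of_sym2_add_one_eq, Fintype.card_fin] at h1
    · omega
    · simp only [ne_eq, Sym2.eq_iff, Fin.ext_iff]
      omega
    · rw [Finset.disjoint_left]
      simp only [Finset.mem_image, Finset.mem_insert, Finset.mem_singleton]
      rintro _ ⟨i, -, rfl⟩ hz
      have hi := Fin.val_add_one_cases i
      simp only [Sym2.eq_iff, Fin.ext_iff] at hz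
      omega
  have hnonleaf : ∀ v, (v ≠ a ∧ v ≠ b ∧ v ≠ c ∧ v ≠ d) → v ∈ E ∧ ∀ u, u + 1 = v → u ∈ E := by
    intro v hv
    have hnbr : ∀ w, (diagGraph D).Adj v w → w = v + 1 ∨ v = w + 1 := by
      intro w hw
      have := hside v w hw
      grind [Sym2.eq_iff]
    obtain ⟨w, hw⟩ := h.2.1.connected.preconnected.exists_adj_of_nontrivial v
    obtain ⟨w', hne, hw'⟩ := h.exists_ne_adj hc hv hw
    have h1 := hnbr w hw
    have h2 := hnbr w' hw'
    have hinj : ∀ x y : Fin (m + 4), x + 1 = y + 1 → x = y := fun x y => add_right_cancel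
    simp only [hmemE]
    constructor
    · grind
    · rintro u rfl
      have := hw.symm
      have := hw'.symm
      grind
  have hmiss : ∀ i, i ∉ E → (i = a ∧ i + 1 = b) ∨ (i = b ∧ i + 1 = c) ∨ (i = c ∧ i + 1 = d) ∨
      (i = d ∧ i + 1 = a) := by
    intro i hi
    have h1 : i = a ∨ i = b ∨ i = c ∨ i = d := by
      by_contra! hne
      exact hi (hnonleaf i hne).1
    have h2 : i + 1 = a ∨ i + 1 = b ∨ i + 1 = c ∨ i + 1 = d := by
      by_contra! hne
      exact hi ((hnonleaf (i + 1) hne).2 i rfl)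
    have hi := Fin.val_add_one_cases i
    simp only [Fin.ext_iff, Fin.lt_def] at *
    omega
  have hcompl : Eᶜ ⊆ {a, b, c, d} := by
    intro i hi
    have := hmiss i (Finset.mem_compl.1 hi)
    simp only [Finset.mem_insert, Finset.mem_singleton]
    tauto
  have hcompl_card : Eᶜ.card = 3 := by
    have := Finset.card_compl_add_card E
    rw [Fintype.card_fin] at this
    omega
  have habcd : ({a, b, c, d} : Finset (Fin (m + 4))).card = 4 := by
    simp [Finset.card_insert_of_notMem, l₁.ne, l₂.ne, l₃.ne, (l₁.trans l₂).ne, (l₂.trans l₃).ne,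
      (l₁.trans (l₂.trans l₃)).ne]
  obtain ⟨e, he⟩ := Finset.card_eq_one.1 (show ({a, b, c, d} \ Eᶜ : Finset _).card = 1 by
    rw [Finset.card_sdiff_of_subset hcompl]; omega)
  have he' : ∀ x, x = a ∨ x = b ∨ x = c ∨ x = d → (x ∉ E ↔ x ≠ e) := by
    intro x hx
    have := Finset.ext_iff.1 he x
    simp only [Finset.mem_sdiff, Finset.mem_compl, not_not, Finset.mem_insert,
      Finset.mem_singleton] at this
    tauto
  have hmemE' : ∀ i, i ∉ E ↔ (i = a ∨ i = b ∨ i = c ∨ i = d) ∧ i ≠ e := by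
    intro i
    refine ⟨fun hi => ?_, fun hi => (he' i hi.1).2 hi.2⟩
    have : i = a ∨ i = b ∨ i = c ∨ i = d := by
      have := hmiss i hi
      tauto
    exact ⟨this, (he' i this).1 hi⟩
  have hadj : ∀ u v, (diagGraph D).Adj u v ↔
      s(u, v) = s(a, c) ∨ s(u, v) = s(b, d) ∨
        ∃ i, ¬ ((i = a ∨ i = b ∨ i = c ∨ i = d) ∧ i ≠ e) ∧ s(u, v) = s(i, i + 1) := by
    intro u v
    simp only [← hmemE', not_not]
    rw [← SimpleGraph.mem_edgeSet, ← SimpleGraph.mem_edgeFinset, hedge]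
    simp only [Finset.mem_union, Finset.mem_image, Finset.mem_insert, Finset.mem_singleton]
    grind
  have heabcd : e = a ∨ e = b ∨ e = c ∨ e = d := by
    have : e ∈ ({a, b, c, d} \ Eᶜ : Finset _) := by simp [he]
    simpa using (Finset.mem_sdiff.1 this).1
  have hne : a ≠ b ∧ a ≠ c ∧ a ≠ d ∧ b ≠ c ∧ b ≠ d ∧ c ≠ d :=
    ⟨l₁.ne, (l₁.trans l₂).ne, (l₁.trans (l₂.trans l₃)).ne, l₂.ne, (l₂.trans l₃).ne, l₃.ne⟩
  have hnext : ∀ x, x = a ∨ x = b ∨ x = c ∨ x = d → x ≠ e → (x = a ∧ x + 1 = b) ∨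
      (x = b ∧ x + 1 = c) ∨ (x = c ∧ x + 1 = d) ∨ (x = d ∧ x + 1 = a) :=
    fun x hx hxe => hmiss x ((he' x hx).2 hxe)
  refine ⟨e, heabcd, fun hx => ?_, fun hx => ?_, fun hx => ?_, fun hx => ?_, hadj⟩
  · simpa [hne] using hnext a (by simp) hx
  · simpa [hne, hne.1.symm] using hnext b (by simp) hx
  · simpa [hne, hne.2.1.symm, hne.2.2.2.1.symm] using hnext c (by simp) hx
  · simpa [hne, hne.2.2.1.symm, hne.2.2.2.2.1.symm, hne.2.2.2.2.2.symm] using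
      hnext d (by simp) hx

theorem IsOneCoreTree.exists_forall_adj_iff {m : ℕ} {D : Finset (Fin (m + 4) × Fin (m + 4))}
    (h : IsOneCoreTree D) :
    ∃ t, ∀ u v, (diagGraph D).Adj u v ↔ IsPathLikeChord t s(u, v) := by
  obtain ⟨a, b, c, d, hc⟩ := exists_isUniqueCrossing h.2.2.1
  obtain ⟨e, he, ha, hb, hc', hd, hadj⟩ := h.exists_adj_iff hc
  have l₁ := hc.lt₁
  have l₂ := hc.lt₂
  have l₃ := hc.lt₃
  have hmain : ∀ p q r s : Fin (m + 4), p + 1 = q → q + 1 = r → r + 1 = s →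
      (∀ i, ¬ ((i = a ∨ i = b ∨ i = c ∨ i = d) ∧ i ≠ e) ↔ i ≠ p ∧ i ≠ q ∧ i ≠ r) →
      (s(p, r) = s(b, d) ∧ s(q, s) = s(a, c) ∨ s(p, r) = s(a, c) ∧ s(q, s) = s(b, d)) →
      ∃ t, ∀ u v, (diagGraph D).Adj u v ↔ IsPathLikeChord t s(u, v) := by
    rintro p _ _ _ rfl rfl rfl hpE hpc
    refine ⟨p, fun u v => ?_⟩
    rw [hadj, IsPathLikeChord]
    simp only [hpE, and_assoc]
    rcases hpc with ⟨h4, h5⟩ | ⟨h4, h5⟩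
    · rw [h4, h5, or_left_comm]
    · rw [h4, h5]
  have hne : a ≠ b ∧ a ≠ c ∧ a ≠ d ∧ b ≠ c ∧ b ≠ d ∧ c ≠ d :=
    ⟨l₁.ne, (l₁.trans l₂).ne, (l₁.trans (l₂.trans l₃)).ne, l₂.ne, (l₂.trans l₃).ne, l₃.ne⟩
  obtain ⟨n₁, n₂, n₃, n₄, n₅, n₆⟩ := hne
  rcases he with rfl | rfl | rfl | rfl
  · exact hmain b c d e (hb n₁.symm) (hc' n₂.symm) (hd n₃.symm) (fun i => by grind)
      (Or.inl ⟨rfl, Sym2.eq_swap⟩)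
  · exact hmain c d a e (hc' n₄.symm) (hd n₅.symm) (ha n₁) (fun i => by grind)
      (Or.inr ⟨Sym2.eq_swap, Sym2.eq_swap⟩)
  · exact hmain d a b e (hd n₆.symm) (ha n₂) (hb n₄) (fun i => by grind)
      (Or.inl ⟨Sym2.eq_swap, rfl⟩)
  · exact hmain a b c e (ha n₃) (hb n₅) (hc' n₆) (fun i => by grind) (Or.inr ⟨rfl, rfl⟩)

theorem IsOneCoreTree.exists_forall_mem_iff {m : ℕ} {D : Finset (Fin (m + 4) × Fin (m + 4))}
    (h : IsOneCoreTree D) :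
    ∃ t, ∀ u v, (u, v) ∈ D ↔ u < v ∧ IsPathLikeChord t s(u, v) := by
  obtain ⟨t, ht⟩ := h.exists_forall_adj_iff
  refine ⟨t, fun u v => ?_⟩
  rw [← ht, diagGraph_adj_iff]
  constructor
  · intro huv
    have := h.1 _ huv
    exact ⟨this, this.ne, Or.inl huv⟩
  · rintro ⟨hlt, -, huv | huv⟩
    · exact huv
    · exact absurd (h.1 _ huv) hlt.asymm

theorem IsOneCoreTree.exists_eq_image_rotPair {m : ℕ}
    {D₁ D₂ : Finset (Fin (m + 4) × Fin (m + 4))}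
    (h₁ : IsOneCoreTree D₁) (h₂ : IsOneCoreTree D₂) : ∃ c, D₂ = D₁.image (rotPair c) := by
  obtain ⟨t₁, ht₁⟩ := h₁.exists_forall_mem_iff
  obtain ⟨t₂, ht₂⟩ := h₂.exists_forall_mem_iff
  obtain ⟨c, rfl⟩ : ∃ c, t₂ = t₁ + c := ⟨t₂ - t₁, by abel⟩
  refine ⟨c, ?_⟩
  ext ⟨u, v⟩
  obtain ⟨u, rfl⟩ : ∃ u', u = u' + c := ⟨u - c, by abel⟩
  obtain ⟨v, rfl⟩ : ∃ v', v = v' + c := ⟨v - c, by abel⟩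
  rw [ht₂, isPathLikeChord_map_add, Finset.mem_image]
  constructor
  · rintro ⟨hlt, huv⟩
    have hne : u ≠ v := by rintro rfl; exact lt_irrefl _ hlt
    rcases hne.lt_or_gt with hl | hl
    · exact ⟨(u, v), (ht₁ _ _).2 ⟨hl, huv⟩, if_pos hlt.le⟩
    · exact ⟨(v, u), (ht₁ _ _).2 ⟨hl, by rwa [Sym2.eq_swap]⟩, if_neg hlt.not_ge⟩
  · rintro ⟨⟨x, y⟩, hxy, heq⟩
    obtain ⟨hl, hch⟩ := (ht₁ _ _).1 hxy
    have hne : x + c ≠ y + c := fun h => hl.ne (add_right_cancel h)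
    unfold rotPair at heq
    split_ifs at heq with hle <;> simp only [Prod.mk.injEq, add_left_inj] at heq <;>
      obtain ⟨rfl, rfl⟩ := heq
    · exact ⟨lt_of_le_of_ne hle hne, hch⟩
    · exact ⟨not_le.1 hle, by rwa [Sym2.eq_swap]⟩

/-- The path-like `1`-core tree with chords `(i, i + 1)` for `i ≤ m`, `(0, m + 2)` and
`(m + 1, m + 3)`. -/
def pathLikeTree (m : ℕ) : Finset (Fin (m + 4) × Fin (m + 4)) :=
  Finset.univ.filter fun p => ((p.1 : ℕ) ≤ m ∧ (p.2 : ℕ) = p.1 + 1) ∨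
    ((p.1 : ℕ) = 0 ∧ (p.2 : ℕ) = m + 2) ∨ ((p.1 : ℕ) = m + 1 ∧ (p.2 : ℕ) = m + 3)

theorem mem_pathLikeTree {m : ℕ} {u v : Fin (m + 4)} :
    (u, v) ∈ pathLikeTree m ↔ ((u : ℕ) ≤ m ∧ (v : ℕ) = u + 1) ∨
      ((u : ℕ) = 0 ∧ (v : ℕ) = m + 2) ∨ ((u : ℕ) = m + 1 ∧ (v : ℕ) = m + 3) := by
  simp [pathLikeTree]

theorem isDiagram_pathLikeTree (m : ℕ) : IsDiagram (pathLikeTree m) := by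
  rintro ⟨u, v⟩ h
  rw [mem_pathLikeTree] at h
  simp only [Fin.lt_def]
  omega

theorem adj_of_mem_pathLikeTree {m : ℕ} {u v : Fin (m + 4)} (h : (u, v) ∈ pathLikeTree m) :
    (diagGraph (pathLikeTree m)).Adj u v :=
  diagGraph_adj_iff.2 ⟨(isDiagram_pathLikeTree m _ h).ne, Or.inl h⟩

theorem connected_pathLikeTree (m : ℕ) : (diagGraph (pathLikeTree m)).Connected := by
  have hlow : ∀ k (hk : k < m + 2),
      (diagGraph (pathLikeTree m)).Reachable 0 ⟨k, by omega⟩ := by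
    intro k
    induction k with
    | zero => exact fun _ => .rfl
    | succ k ih =>
      intro hk
      refine (ih (by omega)).trans (adj_of_mem_pathLikeTree ?_).reachable
      rw [mem_pathLikeTree]
      dsimp only
      omega
  have hreach : ∀ v, (diagGraph (pathLikeTree m)).Reachable 0 v := by
    intro v
    by_cases h : (v : ℕ) < m + 2
    · exact hlow v h
    by_cases h' : (v : ℕ) = m + 2
    · exact (adj_of_mem_pathLikeTree (mem_pathLikeTree.2 (by simp [h']))).reachable
    · refine (hlow (m + 1) (by omega)).trans (adj_of_mem_pathLikeTree ?_).reachable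
      rw [mem_pathLikeTree]
      dsimp only
      omega
  exact { preconnected := fun u v => (hreach u).symm.trans (hreach v) }

theorem card_pathLikeTree_le (m : ℕ) : (pathLikeTree m).card ≤ m + 3 := by
  have hsub : pathLikeTree m ⊆ (Finset.univ : Finset (Fin (m + 3))).image fun (i : Fin (m + 3)) =>
      if (i : ℕ) ≤ m then ((i.castSucc, i.succ) : Fin (m + 4) × Fin (m + 4)) else
        if (i : ℕ) = m + 1 then (0, ⟨m + 2, by omega⟩)
        else (⟨m + 1, by omega⟩, ⟨m + 3, by omega⟩) := by
    rintro ⟨u, v⟩ h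
    rw [mem_pathLikeTree] at h
    rw [Finset.mem_image]
    rcases h with ⟨h₁, h₂⟩ | ⟨h₁, h₂⟩ | ⟨h₁, h₂⟩
    · refine ⟨⟨u, by omega⟩, Finset.mem_univ _, ?_⟩
      simp [Fin.ext_iff, h₁, h₂]
    · refine ⟨⟨m + 1, by omega⟩, Finset.mem_univ _, ?_⟩
      simp [Fin.ext_iff, h₁, h₂]
    · refine ⟨⟨m + 2, by omega⟩, Finset.mem_univ _, ?_⟩
      simp [Fin.ext_iff, h₁, h₂]
  simpa using (Finset.card_le_card hsub).trans Finset.card_image_le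

theorem isTree_pathLikeTree (m : ℕ) : (diagGraph (pathLikeTree m)).IsTree := by
  classical
  have hconn := connected_pathLikeTree m
  refine SimpleGraph.isTree_iff_connected_and_card.2 ⟨hconn, ?_⟩
  have hle := hconn.card_vert_le_card_edgeSet_add_one
  have hsub : (diagGraph (pathLikeTree m)).edgeFinset ⊆
      (pathLikeTree m).image fun p => s(p.1, p.2) := by
    intro z hz
    induction z with | _ u v
    rw [SimpleGraph.mem_edgeFinset, SimpleGraph.mem_edgeSet, diagGraph_adj_iff] at hz
    rw [Finset.mem_image]
    rcases hz.2 with h | h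
    · exact ⟨_, h, rfl⟩
    · exact ⟨_, h, Sym2.eq_swap⟩
  have h₁ := (Finset.card_le_card hsub).trans Finset.card_image_le
  have h₂ := card_pathLikeTree_le m
  rw [SimpleGraph.edgeFinset_card, ← Nat.card_eq_fintype_card] at h₁
  rw [Nat.card_fin] at hle ⊢
  omega

theorem interleaves_pathLikeTree {m : ℕ} :
    Interleaves ((0 : Fin (m + 4)), (⟨m + 2, by omega⟩ : Fin (m + 4)))
      (⟨m + 1, by omega⟩, ⟨m + 3, by omega⟩) := by
  simp [Interleaves, Fin.lt_def]

theorem crossNum_pathLikeTree (m : ℕ) : crossNum (pathLikeTree m) = 1 := by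
  refine Finset.card_eq_one.2
    ⟨((0, ⟨m + 2, by omega⟩), (⟨m + 1, by omega⟩, ⟨m + 3, by omega⟩)), ?_⟩
  ext ⟨⟨a, c⟩, ⟨b, d⟩⟩
  simp only [Finset.mem_filter, Finset.mem_product, mem_pathLikeTree, Interleaves,
    Finset.mem_singleton, Prod.mk.injEq, Fin.ext_iff, Fin.lt_def, Fin.val_zero]
  omega

theorem degreeAt_pathLikeTree_ne_one {m : ℕ} (v : Fin (m + 4)) (hv : (v : ℕ) ≤ m + 1) :
    degreeAt (pathLikeTree m) v ≠ 1 := by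
  have hnext : ∃ p ∈ pathLikeTree m, p.1 = v ∧ ((v : ℕ) = 0 → (p.2 : ℕ) = 1) := by
    by_cases h : (v : ℕ) ≤ m
    · exact ⟨(v, ⟨v + 1, by omega⟩), mem_pathLikeTree.2 (by simp [h]), rfl, by simp⟩
    · exact ⟨(v, ⟨m + 3, by omega⟩), mem_pathLikeTree.2 (by dsimp only; omega), rfl, by omega⟩
  have hprev : ∃ q ∈ pathLikeTree m, q.2 = v ∨ ((v : ℕ) = 0 ∧ q.1 = v ∧ (q.2 : ℕ) = m + 2) := by
    by_cases h : (v : ℕ) = 0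
    · exact ⟨(v, ⟨m + 2, by omega⟩), mem_pathLikeTree.2 (by simp [h]), Or.inr ⟨h, rfl, rfl⟩⟩
    · exact ⟨(⟨v - 1, by omega⟩, v), mem_pathLikeTree.2 (by dsimp only; omega), Or.inl rfl⟩
  obtain ⟨p, hp, hpv, hp'⟩ := hnext
  obtain ⟨q, hq, hqv⟩ := hprev
  have hlt := isDiagram_pathLikeTree m p hp
  refine (Finset.one_lt_card.2 ⟨p, Finset.mem_filter.2 ⟨hp, Or.inl hpv⟩, q,
    Finset.mem_filter.2 ⟨hq, by tauto⟩, ?_⟩).ne'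
  rintro rfl
  simp only [Fin.ext_iff, Fin.lt_def] at *
  omega

theorem isOneCoreTree_pathLikeTree (m : ℕ) : IsOneCoreTree (pathLikeTree m) := by
  refine ⟨isDiagram_pathLikeTree m, isTree_pathLikeTree m, crossNum_pathLikeTree m, ?_⟩
  have h₁ : ((0 : Fin (m + 4)), (⟨m + 2, by omega⟩ : Fin (m + 4))) ∈ pathLikeTree m :=
    mem_pathLikeTree.2 (by simp)
  have h₂ : ((⟨m + 1, by omega⟩ : Fin (m + 4)), (⟨m + 3, by omega⟩ : Fin (m + 4))) ∈
      pathLikeTree m := mem_pathLikeTree.2 (by simp)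
  rintro ⟨u, v⟩ huv hdeg
  rcases mem_pathLikeTree.1 huv with h | h | h
  · have := degreeAt_pathLikeTree_ne_one u (by omega)
    have := degreeAt_pathLikeTree_ne_one v (by omega)
    tauto
  · have huv' : (u, v) = (0, ⟨m + 2, by omega⟩) := Prod.ext (Fin.ext h.1) (Fin.ext h.2)
    exact ⟨_, h₂, Or.inl (huv' ▸ interleaves_pathLikeTree)⟩
  · have huv' : (u, v) = (⟨m + 1, by omega⟩, ⟨m + 3, by omega⟩) :=
      Prod.ext (Fin.ext h.1) (Fin.ext h.2)
    exact ⟨_, h₁, Or.inr (huv' ▸ interleaves_pathLikeTree)⟩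

/-- For each `n ≥ 4` there is, up to rotation, exactly one `1`-core tree on `n`
vertices of a circle: `1`-core trees on `n` points exist, and any two of them
differ by a rotation of the circle. (Equivalently, the generating function of
`1`-core trees is `G(x) = Σ_{n ≥ 4} xⁿ = x⁴/(1−x)`.) -/
theorem oneCoreTree_exists_unique_up_to_rotation (n : ℕ) (hn : 4 ≤ n) :
    (∃ D : Finset (Fin n × Fin n), IsOneCoreTree D) ∧
    ∀ D₁ D₂ : Finset (Fin n × Fin n), IsOneCoreTree D₁ → IsOneCoreTree D₂ →
      ∃ c : Fin n, D₂ = D₁.image (rotPair c) := by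
  obtain ⟨m, rfl⟩ : ∃ m, n = m + 4 := ⟨n - 4, by omega⟩
  exact ⟨⟨_, isOneCoreTree_pathLikeTree m⟩, fun _ _ h₁ h₂ => h₁.exists_eq_image_rotPair h₂⟩
end
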